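/- Let B be the open unit ball of ℝ⁴ and B̄ its closure. Let Λ > 0, let (ρ_k) be a sequence of reals with 0 < ρ_k ≤ Λ, and let (u_k) be a sequence of solutions of the Dirichlet mean field problem on B with parameters ρ_k such that sup_{x ∈ B̄} u_k(x) → +∞. Then, after passing to a subsequence, there exist a positive integer m and m distinct points x₁, …, x_m in the open ball B such that: (i) u_k converges to u₀ := 64π²·∑_{j=1}^m G(·, x_j) uniformly on every compact subset of B̄ ∖ {x₁,…,x_m}, where G is Boggio's Green function on the unit ball; and (ii) for each j ∈ {1,…,m}, the Fréchet derivative at x_j of the map x ↦ R(x, x_j) + ∑_{l ≠ j} G(x, x_l) is the zero linear map, where R(x,y) = G(x,y) + log‖x−y‖/(8π²) is the regular part extended smoothly across the diagonal. -/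

import Mathlib

open MeasureTheory Metric Filter

noncomputable section

/-- The Laplacian of `f : ℝ⁴ → ℝ` at `x`: the trace of the second derivative. -/
def lap (f : EuclideanSpace ℝ (Fin 4) → ℝ) (x : EuclideanSpace ℝ (Fin 4)) : ℝ :=
  ∑ i : Fin 4,
    fderiv ℝ (fun y => fderiv ℝ f y (EuclideanSpace.single i (1:ℝ))) x
      (EuclideanSpace.single i (1:ℝ))

/-- `u` is a solution of the Dirichlet mean field problem on the open unit ball of `ℝ⁴`
with parameter `ρ`. -/
def IsMFSolution (ρ : ℝ) (u : EuclideanSpace ℝ (Fin 4) → ℝ) : Prop :=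
  ContDiffOn ℝ 4 u (closedBall (0 : EuclideanSpace ℝ (Fin 4)) 1) ∧
  (∀ x ∈ ball (0 : EuclideanSpace ℝ (Fin 4)) 1,
    lap (lap u) x
      = ρ * Real.exp (u x) /
          ∫ y in ball (0 : EuclideanSpace ℝ (Fin 4)) 1, Real.exp (u y)) ∧
  (∀ x : EuclideanSpace ℝ (Fin 4), ‖x‖ = 1 →
    u x = 0 ∧ fderivWithin ℝ u (closedBall (0 : EuclideanSpace ℝ (Fin 4)) 1) x = 0)

/-- Boggio's auxiliary quantity `[x,y] = √(‖x−y‖² + (1−‖x‖²)(1−‖y‖²))`. -/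
def brkt (x y : EuclideanSpace ℝ (Fin 4)) : ℝ :=
  Real.sqrt (‖x - y‖ ^ 2 + (1 - ‖x‖ ^ 2) * (1 - ‖y‖ ^ 2))

/-- Boggio's Green function of the bilaplacian with Dirichlet boundary conditions on the
unit ball of `ℝ⁴`. -/
def boggioG (x y : EuclideanSpace ℝ (Fin 4)) : ℝ :=
  (1 / (8 * Real.pi ^ 2)) * ∫ v in (1:ℝ)..(brkt x y / ‖x - y‖), (v ^ 2 - 1) / v ^ 3

/-- The regular part of Boggio's Green function, extended smoothly across the diagonal:
`R(x,y) = (1/(8π²))( log [x,y] + ‖x−y‖²/(2[x,y]²) − 1/2 )`. -/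
def regR (x y : EuclideanSpace ℝ (Fin 4)) : ℝ :=
  (1 / (8 * Real.pi ^ 2)) *
    (Real.log (brkt x y) + ‖x - y‖ ^ 2 / (2 * brkt x y ^ 2) - 1 / 2)

section

open Set Topology

/-- shorthand for the ambient space -/
abbrev E4 := EuclideanSpace ℝ (Fin 4)

lemma lap_congr {f g : E4 → ℝ} {x : E4} (h : f =ᶠ[𝓝 x] g) : lap f x = lap g x := by
  unfold lap
  refine Finset.sum_congr rfl (fun i _ => ?_)
  have : (fun y => fderiv ℝ f y (EuclideanSpace.single i (1:ℝ))) =ᶠ[𝓝 x]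
      (fun y => fderiv ℝ g y (EuclideanSpace.single i (1:ℝ))) := by
    filter_upwards [h.fderiv (𝕜 := ℝ)] with y hy
    rw [hy]
  rw [this.fderiv_eq]

lemma lap_eq_of {f : E4 → ℝ} {f' : E4 → E4 →L[ℝ] ℝ} {x : E4} {L : Fin 4 → E4 →L[ℝ] ℝ}
    (h1 : ∀ᶠ y in 𝓝 x, HasFDerivAt f (f' y) y)
    (h2 : ∀ i, HasFDerivAt (fun y => f' y (EuclideanSpace.single i (1:ℝ))) (L i) x) :
    lap f x = ∑ i, L i (EuclideanSpace.single i (1:ℝ)) := by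
  unfold lap
  refine Finset.sum_congr rfl (fun i _ => ?_)
  have : (fun y => fderiv ℝ f y (EuclideanSpace.single i (1:ℝ))) =ᶠ[𝓝 x]
      (fun y => f' y (EuclideanSpace.single i (1:ℝ))) := by
    filter_upwards [h1] with y hy
    rw [hy.fderiv]
  rw [this.fderiv_eq, (h2 i).fderiv]

/-- quadratic functions -/
def quad (a : ℝ) (c : E4) (b : ℝ) (y : E4) : ℝ := a * ‖y‖ ^ 2 + inner ℝ c y + b

/-- derivative of a quadratic function -/
def quad' (a : ℝ) (c : E4) (y : E4) : E4 →L[ℝ] ℝ := (2 * a) • innerSL ℝ y + innerSL ℝ c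

lemma quad_hasFDerivAt (a : ℝ) (c : E4) (b : ℝ) (y : E4) :
    HasFDerivAt (quad a c b) (quad' a c y) y := by
  have h1 := ((hasStrictFDerivAt_norm_sq y).hasFDerivAt).const_mul a
  have h2 := (innerSL ℝ c).hasFDerivAt (x := y)
  have := (h1.add h2).add_const b
  refine this.congr_fderiv ?_
  ext v
  simp [quad']
  ring

lemma quad_contDiff (a : ℝ) (c : E4) (b : ℝ) {n : WithTop ℕ∞} : ContDiff ℝ n (quad a c b) := by
  unfold quad
  exact ((contDiff_const.mul (contDiff_norm_sq ℝ)).add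
    (innerSL ℝ c).contDiff).add contDiff_const

lemma quad'_single (a : ℝ) (c : E4) (y : E4) (i : Fin 4) :
    quad' a c y (EuclideanSpace.single i (1:ℝ)) = 2 * a * y i + c i := by
  simp [quad', PiLp.inner_apply]

lemma coord_hasFDerivAt (a : ℝ) (c : E4) (y : E4) (i : Fin 4) :
    HasFDerivAt (fun y : E4 => 2 * a * y i + c i) ((2 * a) • (EuclideanSpace.proj i : E4 →L[ℝ] ℝ)) y := by
  have := (((EuclideanSpace.proj i : E4 →L[ℝ] ℝ).hasFDerivAt (x := y)).const_mul (2 * a)).add_const (c i)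
  simpa using this

lemma lap_quad_mul {a a' b b' : ℝ} {c c' x : E4} {φ φ' : ℝ → ℝ} {φ'' : ℝ}
    (h1 : ∀ᶠ s in 𝓝 (quad a c b x), HasDerivAt φ (φ' s) s)
    (h2 : HasDerivAt φ' φ'' (quad a c b x)) :
    lap (fun y => quad a' c' b' y * φ (quad a c b y)) x =
      quad a' c' b' x * (φ'' * (4 * a ^ 2 * ‖x‖ ^ 2 + 4 * a * inner ℝ c x + ‖c‖ ^ 2)
        + 8 * a * φ' (quad a c b x))
      + 2 * φ' (quad a c b x) * (4 * a * a' * ‖x‖ ^ 2 + 2 * a * inner ℝ c' x + 2 * a' * inner ℝ c x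
        + inner ℝ c c') + 8 * a' * φ (quad a c b x) := by
  have h1' : ∀ᶠ y in 𝓝 x, HasDerivAt φ (φ' (quad a c b y)) (quad a c b y) :=
    ((quad_contDiff a c b (n := 0)).continuous.continuousAt.eventually h1)
  have e1 : ∀ᶠ y in 𝓝 x, HasFDerivAt (fun y => quad a' c' b' y * φ (quad a c b y))
      (quad a' c' b' y • (φ' (quad a c b y) • quad' a c y) + φ (quad a c b y) • quad' a' c' y) y := by
    filter_upwards [h1'] with y hy
    exact (quad_hasFDerivAt a' c' b' y).mul (hy.comp_hasFDerivAt y (quad_hasFDerivAt a c b y))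
  have hq := quad_hasFDerivAt a c b x
  have hp := quad_hasFDerivAt a' c' b' x
  have hφ := h1'.self_of_nhds.comp_hasFDerivAt x hq
  have hφ' := h2.comp_hasFDerivAt x hq
  rw [lap_eq_of e1 (L := fun i => _) (fun i => by
    have := (hp.mul (hφ'.mul (coord_hasFDerivAt a c x i))).add (hφ.mul (coord_hasFDerivAt a' c' x i))
    simp only [ContinuousLinearMap.add_apply, ContinuousLinearMap.smul_apply, quad'_single,
      smul_eq_mul]
    exact this)]
  simp only [Fin.sum_univ_four, ContinuousLinearMap.add_apply, ContinuousLinearMap.smul_apply, quad'_single,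
      smul_eq_mul, EuclideanSpace.norm_sq_eq, PiLp.inner_apply, Real.norm_eq_abs, sq_abs]
  simp
  ring

end

section

open Set Topology

/-- closed unit ball -/
abbrev cB : Set E4 := closedBall (0:E4) 1
/-- open unit ball -/
abbrev oB : Set E4 := ball (0:E4) 1

lemma cB_uniq : UniqueDiffOn ℝ cB := by
  refine uniqueDiffOn_convex (convex_closedBall _ _) ?_
  rw [interior_closedBall _ one_ne_zero]
  exact ⟨0, by simp⟩

lemma oB_nhds {x : E4} (hx : x ∈ oB) : cB ∈ 𝓝 x :=
  Filter.mem_of_superset (isOpen_ball.mem_nhds hx) ball_subset_closedBall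

/-- partial derivatives within the closed ball -/
def pd (i : Fin 4) (f : E4 → ℝ) (y : E4) : ℝ := fderivWithin ℝ f cB y (EuclideanSpace.single i (1:ℝ))

lemma pd_contDiffOn {n m : WithTop ℕ∞} {f : E4 → ℝ} (hf : ContDiffOn ℝ n f cB) (h : m + 1 ≤ n)
    (i : Fin 4) : ContDiffOn ℝ m (pd i f) cB :=
  (hf.fderivWithin cB_uniq h).clm_apply contDiffOn_const

lemma pd_eq {f : E4 → ℝ} {x : E4} (hx : x ∈ oB) (i : Fin 4) :
    pd i f x = fderiv ℝ f x (EuclideanSpace.single i (1:ℝ)) := by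
  unfold pd
  rw [fderivWithin_of_mem_nhds (oB_nhds hx)]

lemma lap_eq_pd {f : E4 → ℝ} {x : E4} (hx : x ∈ oB) : lap f x = ∑ i, pd i (pd i f) x := by
  unfold lap
  refine Finset.sum_congr rfl (fun i _ => ?_)
  rw [pd_eq hx]
  have : (fun y => fderiv ℝ f y (EuclideanSpace.single i (1:ℝ))) =ᶠ[𝓝 x] pd i f := by
    filter_upwards [isOpen_ball.mem_nhds hx] with y hy
    rw [pd_eq hy]
  rw [this.fderiv_eq]

lemma integrableOn_oB {f : E4 → ℝ} (hf : ContinuousOn f cB) : IntegrableOn f oB :=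
  (hf.integrableOn_compact (isCompact_closedBall 0 1)).mono_set ball_subset_closedBall

lemma integral_pd_zero {f : E4 → ℝ} (hf : ContDiffOn ℝ 1 f cB) (h0 : ∀ x : E4, ‖x‖ = 1 → f x = 0)
    (i : Fin 4) : ∫ y in oB, pd i f y = 0 := by
  classical
  set F : E4 → ℝ := cB.indicator f with hF
  have hcont : ContinuousOn (fderivWithin ℝ f cB) cB := hf.continuousOn_fderivWithin cB_uniq le_rfl
  obtain ⟨C, hC⟩ := (isCompact_closedBall (0:E4) 1).exists_bound_of_continuousOn hcont
  have hC0 : 0 ≤ C := (norm_nonneg _).trans (hC 0 (by simp))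
  have hL : LipschitzOnWith ⟨C, hC0⟩ f cB := by
    refine Convex.lipschitzOnWith_of_nnnorm_fderivWithin_le (𝕜 := ℝ) (hf.differentiableOn one_ne_zero) ?_ (convex_closedBall _ _)
    intro x hx
    exact hC x hx
  have hmix : ∀ x ∈ cB, ∀ y ∉ cB, |f x| ≤ C * ‖x - y‖ := by
    intro x hx y hy
    have hx' : ‖x‖ ≤ 1 := by simpa using hx
    have hy' : 1 < ‖y‖ := by simpa using hy
    have hc : ContinuousOn (fun t : ℝ => ‖x + t • (y - x)‖) (Icc 0 1) := by fun_prop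
    have := intermediate_value_Icc (zero_le_one) hc
    obtain ⟨t, ht, hte⟩ := this (show (1:ℝ) ∈ _ by constructor <;> simp <;> linarith)
    set z := x + t • (y - x) with hz
    have hz1 : ‖z‖ = 1 := hte
    have h1 := hL.dist_le_mul x hx z (by simp [hz1])
    rw [h0 z hz1, Real.dist_eq, sub_zero] at h1
    refine h1.trans ?_
    change C * _ ≤ _
    refine mul_le_mul_of_nonneg_left ?_ hC0
    rw [dist_eq_norm]
    have : x - z = t • (x - y) := by rw [hz]; module
    rw [this, norm_smul, Real.norm_eq_abs, abs_of_nonneg ht.1]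
    nlinarith [ht.2, norm_nonneg (x - y)]
  have hFL : LipschitzWith ⟨C, hC0⟩ F := by
    refine LipschitzWith.of_dist_le_mul (fun x y => ?_)
    rw [Real.dist_eq, dist_eq_norm]
    change _ ≤ C * _
    by_cases hx : x ∈ cB <;> by_cases hy : y ∈ cB
    · rw [hF, indicator_of_mem hx, indicator_of_mem hy]
      have := hL.dist_le_mul x hx y hy
      rwa [Real.dist_eq, dist_eq_norm] at this
    · rw [hF, indicator_of_mem hx, indicator_of_notMem hy, sub_zero]
      exact hmix x hx y hy
    · rw [hF, indicator_of_notMem hx, indicator_of_mem hy, zero_sub, abs_neg, norm_sub_rev]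
      exact hmix y hy x hx
    · rw [hF, indicator_of_notMem hx, indicator_of_notMem hy]
      simp; positivity
  have hsupp : HasCompactSupport F := by
    refine HasCompactSupport.intro (isCompact_closedBall (0:E4) 1) ?_
    intro x hx
    exact indicator_of_notMem hx _
  have key := (LipschitzWith.const (1:ℝ)).integral_lineDeriv_mul_eq (μ := (volume : Measure E4)) hFL hsupp (EuclideanSpace.single i (1:ℝ))
  have hlc : ∀ x : E4, lineDeriv ℝ (fun _ : E4 => (1:ℝ)) x (EuclideanSpace.single i (1:ℝ)) = 0 := fun x => by simp [lineDeriv]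
  have key : 0 = ∫ x : E4, lineDeriv ℝ F x (-EuclideanSpace.single i (1:ℝ)) := by
    simpa [hlc] using key
  rw [← setIntegral_eq_integral_of_forall_compl_eq_zero (s := cB)] at key
  swap
  · intro x hx
    have : F =ᶠ[𝓝 x] fun _ => 0 := by
      filter_upwards [isClosed_closedBall.isOpen_compl.mem_nhds hx] with y hy
      exact indicator_of_notMem hy _
    rw [this.lineDeriv_eq]; simp [lineDeriv]
  have hae : (oB : Set E4) =ᵐ[volume] cB := by
    refine (ae_eq_of_subset_of_measure_ge ball_subset_closedBall ?_ measurableSet_ball.nullMeasurableSet ?_)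
    · rw [Measure.addHaar_closedBall_eq_addHaar_ball]
    · exact measure_closedBall_lt_top.ne
  rw [← setIntegral_congr_set hae] at key
  have hneg : ∫ y in oB, pd i f y = - ∫ y in oB, lineDeriv ℝ F y (-EuclideanSpace.single i (1:ℝ)) := by
    rw [← integral_neg]
    refine setIntegral_congr_fun measurableSet_ball ?_
    intro x hx
    have hFe : F =ᶠ[𝓝 x] f := by
      filter_upwards [oB_nhds hx] with y hy
      exact indicator_of_mem hy _
    have hd : DifferentiableAt ℝ f x := (hf.differentiableOn one_ne_zero).differentiableAt (oB_nhds hx)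
    simp only []
    rw [hFe.lineDeriv_eq, hd.lineDeriv_eq_fderiv, pd_eq hx]
    simp
  rw [hneg]
  simp [← key]

lemma pd_mul {f g : E4 → ℝ} (hf : ContDiffOn ℝ 1 f cB) (hg : ContDiffOn ℝ 1 g cB) {x : E4} (hx : x ∈ cB)
    (i : Fin 4) : pd i (fun y => f y * g y) x = f x * pd i g x + pd i f x * g x := by
  unfold pd
  rw [fderivWithin_fun_mul (cB_uniq x hx) (hf.differentiableOn one_ne_zero x hx) (hg.differentiableOn one_ne_zero x hx)]
  simp [mul_comm]

lemma ibp {f g : E4 → ℝ} (hf : ContDiffOn ℝ 1 f cB) (hg : ContDiffOn ℝ 1 g cB)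
    (h0 : ∀ x : E4, ‖x‖ = 1 → f x = 0) (i : Fin 4) :
    ∫ y in oB, f y * pd i g y = - ∫ y in oB, pd i f y * g y := by
  have h := integral_pd_zero (hf.mul hg) (fun x hx => by simp [h0 x hx]) i
  have h2 : ∫ y in oB, pd i (fun y => f y * g y) y = ∫ y in oB, (f y * pd i g y + pd i f y * g y) :=
    setIntegral_congr_fun measurableSet_ball (fun x hx => pd_mul hf hg (ball_subset_closedBall hx) i)
  have hcf := (pd_contDiffOn hf (m := 0) (by simp) i).continuousOn
  have hcg := (pd_contDiffOn hg (m := 0) (by simp) i).continuousOn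
  rw [integral_add (f := fun y => f y * pd i g y) (g := fun y => pd i f y * g y)
    (integrableOn_oB (hf.continuousOn.mul hcg)) (integrableOn_oB (hcf.mul hg.continuousOn))] at h2
  have h3 : ∫ y in oB, pd i (fun y => f y * g y) y = 0 := h
  linarith

lemma green1 {v h : E4 → ℝ} (hv : ContDiffOn ℝ 2 v cB) (hh : ContDiffOn ℝ 2 h cB)
    (h0 : ∀ x : E4, ‖x‖ = 1 → v x = 0 ∧ fderivWithin ℝ v cB x = 0) :
    ∫ y in oB, v y * (∑ i, pd i (pd i h) y) = ∫ y in oB, (∑ i, pd i (pd i v) y) * h y := by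
  have e2 : (1:WithTop ℕ∞) + 1 ≤ 2 := by norm_num
  have h12 : (1:WithTop ℕ∞) ≤ 2 := by norm_num
  have p1 : ∀ {f : E4 → ℝ}, ContDiffOn ℝ 2 f cB → ∀ i, ContDiffOn ℝ 1 (pd i f) cB := fun hf i => pd_contDiffOn hf e2 i
  have p2 : ∀ {f : E4 → ℝ}, ContDiffOn ℝ 2 f cB → ∀ i, ContinuousOn (pd i (pd i f)) cB := fun hf i =>
    (pd_contDiffOn (p1 hf i) (m := 0) (by simp) i).continuousOn
  simp only [Finset.mul_sum, Finset.sum_mul]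
  rw [integral_finset_sum (f := fun i y => v y * pd i (pd i h) y) _ (fun i _ => integrableOn_oB (hv.continuousOn.mul (p2 hh i))),
    integral_finset_sum (f := fun i y => pd i (pd i v) y * h y) _ (fun i _ => integrableOn_oB ((p2 hv i).mul hh.continuousOn))]
  refine Finset.sum_congr rfl (fun i _ => ?_)
  rw [ibp (hv.of_le h12) (p1 hh i) (fun x hx => (h0 x hx).1) i,
    ibp (p1 hv i) (hh.of_le h12) (fun x hx => by simp [pd, (h0 x hx).2]) i]
  simp

lemma green2 {v u : E4 → ℝ} (hv : ContDiffOn ℝ 4 v cB) (hu : ContDiffOn ℝ 4 u cB)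
    (hv0 : ∀ x : E4, ‖x‖ = 1 → v x = 0 ∧ fderivWithin ℝ v cB x = 0)
    (hu0 : ∀ x : E4, ‖x‖ = 1 → u x = 0 ∧ fderivWithin ℝ u cB x = 0) :
    ∫ y in oB, v y * lap (lap u) y = ∫ y in oB, u y * lap (lap v) y := by
  have h24 : (2:WithTop ℕ∞) ≤ 4 := by norm_num
  have e2 : (2:WithTop ℕ∞) + 1 ≤ 3 := by norm_num
  have e3 : (3:WithTop ℕ∞) + 1 ≤ 4 := by norm_num
  have p2 : ∀ {f : E4 → ℝ}, ContDiffOn ℝ 4 f cB → ContDiffOn ℝ 2 (fun y => ∑ i, pd i (pd i f) y) cB := fun hf =>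
    ContDiffOn.sum (fun i _ => pd_contDiffOn (pd_contDiffOn hf e3 i) e2 i)
  have key : ∀ {f : E4 → ℝ} {x : E4}, x ∈ oB → lap (lap f) x = ∑ i, pd i (pd i (fun y => ∑ i, pd i (pd i f) y)) x := by
    intro f x hx
    rw [← lap_eq_pd hx]
    apply lap_congr
    filter_upwards [isOpen_ball.mem_nhds hx] with y hy
    rw [lap_eq_pd hy]
  have a1 := green1 (hv.of_le h24) (p2 hu) hv0
  have a2 := green1 (hu.of_le h24) (p2 hv) hu0
  have b1 : ∀ f g : E4 → ℝ, ∫ y in oB, f y * lap (lap g) y = ∫ y in oB, f y * (∑ i, pd i (pd i (fun y => ∑ i, pd i (pd i g) y)) y) :=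
    fun f g => setIntegral_congr_fun measurableSet_ball (fun y hy => by rw [key hy])
  rw [b1, b1, a1, a2]
  simp only [mul_comm]

end

section

open Set Topology

/-- `f` is `C²` at `x` with Laplacian `l` -/
def HasLap (f : E4 → ℝ) (l : ℝ) (x : E4) : Prop := ContDiffAt ℝ 2 f x ∧ lap f x = l

lemma lap_add' {f g : E4 → ℝ} {x : E4} (hf : ContDiffAt ℝ 2 f x) (hg : ContDiffAt ℝ 2 g x) :
    lap (fun y => f y + g y) x = lap f x + lap g x := by
  unfold lap
  rw [← Finset.sum_add_distrib]
  refine Finset.sum_congr rfl (fun i _ => ?_)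
  have h : ∀ {f : E4 → ℝ}, ContDiffAt ℝ 2 f x → ∀ᶠ y in 𝓝 x, DifferentiableAt ℝ f y := by
    intro f hf
    filter_upwards [hf.eventually (by norm_num)] with y hy
    exact hy.differentiableAt (by norm_num)
  have h2 : ∀ {f : E4 → ℝ}, ContDiffAt ℝ 2 f x →
      DifferentiableAt ℝ (fun y => fderiv ℝ f y (EuclideanSpace.single i (1:ℝ))) x := by
    intro f hf
    have : ContDiffAt ℝ 1 (fderiv ℝ f) x := hf.fderiv_right (by norm_num)
    exact (this.clm_apply contDiffAt_const).differentiableAt (by norm_num)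
  have e : (fun y => fderiv ℝ (fun y => f y + g y) y (EuclideanSpace.single i (1:ℝ))) =ᶠ[𝓝 x]
      (fun y => fderiv ℝ f y (EuclideanSpace.single i (1:ℝ)) + fderiv ℝ g y (EuclideanSpace.single i (1:ℝ))) := by
    filter_upwards [h hf, h hg] with y h1 h2
    rw [fderiv_fun_add h1 h2]; rfl
  rw [e.fderiv_eq, fderiv_fun_add (h2 hf) (h2 hg)]; rfl

lemma lap_cmul {f : E4 → ℝ} {x : E4} (c : ℝ) :
    lap (fun y => c * f y) x = c * lap f x := by
  unfold lap
  rw [Finset.mul_sum]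
  refine Finset.sum_congr rfl (fun i _ => ?_)
  have e : (fun y => fderiv ℝ (fun y => c * f y) y (EuclideanSpace.single i (1:ℝ))) =
      (fun y => c * fderiv ℝ f y (EuclideanSpace.single i (1:ℝ))) := by
    funext y
    have := congrFun (fderiv_const_smul_field (𝕜 := ℝ) (f := f) c) y
    have h2 : fderiv ℝ (fun y => c * f y) y = c • fderiv ℝ f y := this
    rw [h2]; rfl
  rw [e]
  have := congrFun (fderiv_const_smul_field (𝕜 := ℝ) (f := fun y => fderiv ℝ f y (EuclideanSpace.single i (1:ℝ))) c) x
  have h2 : fderiv ℝ (fun y => c * fderiv ℝ f y (EuclideanSpace.single i (1:ℝ))) x = c • fderiv ℝ (fun y => fderiv ℝ f y (EuclideanSpace.single i (1:ℝ))) x := this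
  rw [h2]; rfl

lemma HasLap.add {f g : E4 → ℝ} {l m : ℝ} {x : E4} (hf : HasLap f l x) (hg : HasLap g m x) :
    HasLap (fun y => f y + g y) (l + m) x :=
  ⟨hf.1.add hg.1, by rw [lap_add' hf.1 hg.1, hf.2, hg.2]⟩

lemma HasLap.cmul {f : E4 → ℝ} {l : ℝ} {x : E4} (hf : HasLap f l x) (c : ℝ) :
    HasLap (fun y => c * f y) (c * l) x :=
  ⟨contDiffAt_const.mul hf.1, by rw [lap_cmul, hf.2]⟩

lemma hasLap_log {a b : ℝ} {c x : E4} (h : 0 < quad a c b x) :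
    HasLap (fun y => Real.log (quad a c b y)) (4*a/(quad a c b x) + (4*a*b-‖c‖^2)/(quad a c b x)^2) x := by
  refine ⟨(quad_contDiff a c b).contDiffAt.log h.ne', ?_⟩
  have h1 : ∀ᶠ s in 𝓝 (quad a c b x), HasDerivAt Real.log (s⁻¹) s := by
    filter_upwards [isOpen_ne.mem_nhds h.ne'] with s hs
    exact Real.hasDerivAt_log hs
  have h2 := hasDerivAt_inv h.ne'
  have := lap_quad_mul (a' := 0) (c' := 0) (b' := 1) h1 h2
  simp only [quad, zero_mul, inner_zero_left, zero_add, one_mul, inner_zero_right, mul_zero, add_zero] at this ⊢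
  rw [this]
  simp only [quad] at h
  field_simp
  ring

lemma quad_inv {a b a' b' : ℝ} {c c' x : E4} (h : 0 < quad a c b x) :
    HasLap (fun y => quad a' c' b' y * (quad a c b y)⁻¹) 
     (quad a' c' b' x * (-2*(4*a*b-‖c‖^2)/(quad a c b x)^3)
      - 2/(quad a c b x)^2*(4*a*a'*‖x‖^2 + 2*a*inner ℝ c' x + 2*a'*inner ℝ c x + inner ℝ c c')
      + 8*a'/(quad a c b x)) x := by
  refine ⟨(quad_contDiff a' c' b').contDiffAt.mul ((quad_contDiff a c b).contDiffAt.inv h.ne'), ?_⟩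
  have h1 : ∀ᶠ s in 𝓝 (quad a c b x), HasDerivAt (fun s : ℝ => s⁻¹) (-(s^2)⁻¹) s := by
    filter_upwards [isOpen_ne.mem_nhds h.ne'] with s hs
    exact hasDerivAt_inv hs
  have h2 : HasDerivAt (fun s : ℝ => -(s^2)⁻¹) (2/(quad a c b x)^3) (quad a c b x) := by
    have := ((hasDerivAt_pow 2 (quad a c b x)).fun_inv (pow_ne_zero 2 h.ne')).fun_neg
    refine this.congr_deriv ?_
    field_simp
    ring
  have := lap_quad_mul (a' := a') (c' := c') (b' := b') h1 h2
  rw [this]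
  have hq : 4*a^2*‖x‖^2 + 4*a*inner ℝ c x = 4*a*(quad a c b x - b) := by simp only [quad]; ring
  rw [hq]
  generalize quad a c b x = q at *
  field_simp
  ring

lemma quad_inv2 {a b a' b' : ℝ} {c c' x : E4} (h : 0 < quad a c b x) :
    HasLap (fun y => quad a' c' b' y * ((quad a c b y)^2)⁻¹) 
     (quad a' c' b' x * (8*a/(quad a c b x)^3 - 6*(4*a*b-‖c‖^2)/(quad a c b x)^4)
      - 4/(quad a c b x)^3*(4*a*a'*‖x‖^2 + 2*a*inner ℝ c' x + 2*a'*inner ℝ c x + inner ℝ c c')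
      + 8*a'/(quad a c b x)^2) x := by
  refine ⟨(quad_contDiff a' c' b').contDiffAt.mul (((quad_contDiff a c b).contDiffAt.pow 2).inv (by positivity)), ?_⟩
  have h1 : ∀ᶠ s in 𝓝 (quad a c b x), HasDerivAt (fun s : ℝ => (s^2)⁻¹) (-2*(s^3)⁻¹) s := by
    filter_upwards [isOpen_ne.mem_nhds h.ne'] with s hs
    have := ((hasDerivAt_pow 2 s).fun_inv (pow_ne_zero 2 hs))
    refine this.congr_deriv ?_
    have hs : s ≠ 0 := hs
    field_simp
    try ring
  have h2 : HasDerivAt (fun s : ℝ => -2*(s^3)⁻¹) (6/(quad a c b x)^4) (quad a c b x) := by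
    have := ((hasDerivAt_pow 3 (quad a c b x)).fun_inv (pow_ne_zero 3 h.ne')).const_mul (-2)
    refine this.congr_deriv ?_
    field_simp
    norm_num
    ring
  have := lap_quad_mul (a' := a') (c' := c') (b' := b') h1 h2
  rw [this]
  have hq : 4*a^2*‖x‖^2 + 4*a*inner ℝ c x = 4*a*(quad a c b x - b) := by simp only [quad]; ring
  rw [hq]
  generalize quad a c b x = q at *
  field_simp
  ring

/-- regularised Green function -/
def vreg (x : E4) (al be ep : ℝ) (y : E4) : ℝ :=
  Real.log (quad al ((-2:ℝ)•x) be y) + ((-1) * Real.log (quad 1 ((-2:ℝ)•x) (‖x‖^2+ep) y)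
   + (al-1) * (quad (-1) 0 1 y * (quad al ((-2:ℝ)•x) be y)⁻¹))

lemma vreg_lap {x : E4} {al be ep : ℝ} (hab : al * be = ‖x‖^2) {y : E4}
    (hQ : 0 < quad al ((-2:ℝ)•x) be y) (hq : 0 < quad 1 ((-2:ℝ)•x) (‖x‖^2+ep) y) :
    HasLap (vreg x al be ep) (4*al * (quad 0 0 1 y * (quad al ((-2:ℝ)•x) be y)⁻¹) +
      ((-4) * (quad 0 0 1 y * (quad 1 ((-2:ℝ)•x) (‖x‖^2+ep) y)⁻¹) +
      ((-4*ep) * (quad 0 0 1 y * ((quad 1 ((-2:ℝ)•x) (‖x‖^2+ep) y)^2)⁻¹) +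
      (8*(al-1)) * (quad 0 x (-be) y * ((quad al ((-2:ℝ)•x) be y)^2)⁻¹)))) y := by
  have hn : ‖(-2:ℝ)•x‖^2 = 4*‖x‖^2 := by rw [norm_smul]; norm_num; ring
  have h1 := hasLap_log hQ
  have h2 := (hasLap_log hq).cmul (-1)
  have h3 := (quad_inv (a' := -1) (c' := 0) (b' := 1) hQ).cmul (al-1)
  have := h1.add (h2.add h3)
  refine ⟨this.1, this.2.trans ?_⟩
  rw [hn]
  have e1 : quad 0 0 1 y = 1 := by simp [quad]
  rw [e1]
  have e2 : quad 0 x (-be) y = inner ℝ x y - be := by simp [quad]; ring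
  rw [e2]
  have e4 : quad al ((-2:ℝ)•x) be y = al*‖y‖^2 - 2 * inner ℝ x y + be := by simp [quad, inner_smul_left]; ring
  have e3 : inner ℝ ((-2:ℝ)•x) y = -2 * inner ℝ x y := by rw [inner_smul_left]; simp
  rw [e3]
  have e5 : al * ‖y‖^2 = quad al ((-2:ℝ)•x) be y + 2 * inner ℝ x y - be := by rw [e4]; ring
  simp only [inner_zero_left, inner_zero_right, mul_zero, add_zero]
  have e6 : 4*al*be - 4*‖x‖^2 = 0 := by rw [← hab]; ring
  rw [e6, show 4 * al * -1 * ‖y‖^2 = -4 * (al * ‖y‖^2) by ring, e5]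
  generalize quad al ((-2:ℝ)•x) be y = Q at *
  generalize quad 1 ((-2:ℝ)•x) (‖x‖^2+ep) y = q at *
  field_simp
  ring

lemma vreg_lap2 {x : E4} {al be ep : ℝ} (hab : al * be = ‖x‖^2) {y : E4}
    (hQ : 0 < quad al ((-2:ℝ)•x) be y) (hq : 0 < quad 1 ((-2:ℝ)•x) (‖x‖^2+ep) y) :
    lap (lap (vreg x al be ep)) y = 96 * ep^2 / (quad 1 ((-2:ℝ)•x) (‖x‖^2+ep) y)^4 := by
  have hn : ‖(-2:ℝ)•x‖^2 = 4*‖x‖^2 := by rw [norm_smul]; norm_num; ring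
  have he : lap (vreg x al be ep) =ᶠ[𝓝 y] fun y => (4*al * (quad 0 0 1 y * (quad al ((-2:ℝ)•x) be y)⁻¹) +
      ((-4) * (quad 0 0 1 y * (quad 1 ((-2:ℝ)•x) (‖x‖^2+ep) y)⁻¹) +
      ((-4*ep) * (quad 0 0 1 y * ((quad 1 ((-2:ℝ)•x) (‖x‖^2+ep) y)^2)⁻¹) +
      (8*(al-1)) * (quad 0 x (-be) y * ((quad al ((-2:ℝ)•x) be y)^2)⁻¹)))) := by
    have c1 : ∀ᶠ z in 𝓝 y, 0 < quad al ((-2:ℝ)•x) be z :=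
      ((quad_contDiff (n := 2) al ((-2:ℝ)•x) be).continuous.continuousAt).eventually_const_lt hQ
    have c2 : ∀ᶠ z in 𝓝 y, 0 < quad 1 ((-2:ℝ)•x) (‖x‖^2+ep) z :=
      ((quad_contDiff (n := 2) 1 ((-2:ℝ)•x) (‖x‖^2+ep)).continuous.continuousAt).eventually_const_lt hq
    filter_upwards [c1, c2] with z h1 h2
    exact (vreg_lap hab h1 h2).2
  rw [lap_congr he]
  have h1 := (quad_inv (a' := 0) (c' := 0) (b' := 1) hQ).cmul (4*al)
  have h2 := (quad_inv (a' := 0) (c' := 0) (b' := 1) hq).cmul (-4)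
  have h3 := (quad_inv2 (a' := 0) (c' := 0) (b' := 1) hq).cmul (-4*ep)
  have h4 := (quad_inv2 (a' := 0) (c' := x) (b' := -be) hQ).cmul (8*(al-1))
  rw [(h1.add (h2.add (h3.add h4))).2, hn]
  have e1 : quad 0 0 1 y = 1 := by simp [quad]
  rw [e1]
  have e2 : quad 0 x (-be) y = inner ℝ x y - be := by simp [quad]; ring
  rw [e2]
  have e3 : inner ℝ ((-2:ℝ)•x) x = -2 * (al*be) := by rw [inner_smul_left, real_inner_self_eq_norm_sq, hab]; simp
  rw [e3]
  simp only [inner_zero_left, inner_zero_right, mul_zero, add_zero]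
  have e6 : 4*al*be - 4*‖x‖^2 = 0 := by rw [← hab]; ring
  rw [e6]
  generalize quad al ((-2:ℝ)•x) be y = Q at *
  generalize quad 1 ((-2:ℝ)•x) (‖x‖^2+ep) y = q at *
  field_simp
  ring

lemma vreg_contDiffAt {x : E4} {al be ep : ℝ} {y : E4}
    (hQ : 0 < quad al ((-2:ℝ)•x) be y) (hq : 0 < quad 1 ((-2:ℝ)•x) (‖x‖^2+ep) y) :
    ContDiffAt ℝ 4 (vreg x al be ep) y := by
  unfold vreg
  exact ((quad_contDiff _ _ _).contDiffAt.log hQ.ne').add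
    ((contDiffAt_const.mul ((quad_contDiff _ _ _).contDiffAt.log hq.ne')).add
    (contDiffAt_const.mul ((quad_contDiff _ _ _).contDiffAt.mul ((quad_contDiff _ _ _).contDiffAt.inv hQ.ne'))))

lemma Qq {x : E4} {al be ep : ℝ} (hb : be = ‖x‖^2 + ep + 1 - al) (y : E4) :
    quad al ((-2:ℝ)•x) be y = quad 1 ((-2:ℝ)•x) (‖x‖^2+ep) y + (1-al)*(1-‖y‖^2) := by
  simp only [quad]; rw [hb]; ring

lemma q_eq {x : E4} {ep : ℝ} (y : E4) :
    quad 1 ((-2:ℝ)•x) (‖x‖^2+ep) y = ‖x-y‖^2 + ep := by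
  rw [@norm_sub_sq_real]
  simp [quad, inner_smul_left]; ring

lemma vreg_bdry {x : E4} {al be ep : ℝ} (hb : be = ‖x‖^2 + ep + 1 - al) (hep : 0 < ep) {y : E4} (hy : ‖y‖ = 1) :
    vreg x al be ep y = 0 ∧ fderivWithin ℝ (vreg x al be ep) cB y = 0 := by
  have hq : 0 < quad 1 ((-2:ℝ)•x) (‖x‖^2+ep) y := by rw [q_eq]; positivity
  have hQq : quad al ((-2:ℝ)•x) be y = quad 1 ((-2:ℝ)•x) (‖x‖^2+ep) y := by rw [Qq hb]; simp [hy]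
  have hQ : 0 < quad al ((-2:ℝ)•x) be y := by rw [hQq]; exact hq
  have h0 : quad (-1) 0 1 y = 0 := by simp [quad, hy]
  refine ⟨by rw [vreg, h0, hQq]; ring, ?_⟩
  have hc : y ∈ cB := by simp [hy]
  have d1 := (quad_hasFDerivAt al ((-2:ℝ)•x) be y)
  have d2 := (quad_hasFDerivAt 1 ((-2:ℝ)•x) (‖x‖^2+ep) y)
  have d3 := (quad_hasFDerivAt (-1) 0 1 y)
  have dinv : HasFDerivAt (fun y => (quad al ((-2:ℝ)•x) be y)⁻¹) (-((quad al ((-2:ℝ)•x) be y)^2)⁻¹ • quad' al ((-2:ℝ)•x) y) y :=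
    (hasDerivAt_inv hQ.ne').comp_hasFDerivAt y d1
  have D : HasFDerivAt (vreg x al be ep) _ y :=
    (d1.log hQ.ne').add (((d2.log hq.ne').const_mul (-1)).add ((d3.mul dinv).const_mul (al-1)))
  rw [fderivWithin_eq_fderiv (cB_uniq y hc) D.differentiableAt, D.fderiv]
  ext z
  rw [h0, hQq]
  simp [quad']
  field_simp
  ring

end

section

open Set Topology

/-- profile of Boggio's kernel -/
def Phi (t : ℝ) : ℝ := Real.log (1 + t) - t / (1 + t)

/-- Boggio's kernel up to a constant -/
def HH (x y : E4) : ℝ := Phi ((1 - ‖x‖^2) * (1 - ‖y‖^2) / ‖x - y‖^2)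

lemma Phi_hasDerivAt {t : ℝ} (ht : -1 < t) : HasDerivAt Phi (t/(1+t)^2) t := by
  have h1 : (1 + t) ≠ 0 := by linarith
  have hd : HasDerivAt (fun t : ℝ => 1 + t) 1 t := (hasDerivAt_id t).const_add 1
  have := (hd.log h1).sub ((hasDerivAt_id t).div hd h1)
  refine this.congr_deriv ?_
  simp only [id]
  field_simp
  ring

lemma Phi_continuousOn : ContinuousOn Phi (Ici 0) := fun t ht =>
  (Phi_hasDerivAt (by have : (0:ℝ) ≤ t := ht; linarith)).continuousAt.continuousWithinAt

lemma Phi_zero : Phi 0 = 0 := by simp [Phi]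

lemma Phi_mono : StrictMonoOn Phi (Ici 0) := by
  refine strictMonoOn_of_deriv_pos (convex_Ici 0) Phi_continuousOn ?_
  intro t ht
  rw [interior_Ici] at ht
  have ht : (0:ℝ) < t := ht
  rw [(Phi_hasDerivAt (by linarith)).deriv]
  positivity

lemma Phi_nonneg {t : ℝ} (ht : 0 ≤ t) : 0 ≤ Phi t := by
  rw [← Phi_zero]
  exact Phi_mono.monotoneOn (by simp) ht ht

lemma Phi_le_log {t : ℝ} (ht : 0 ≤ t) : Phi t ≤ Real.log (1+t) := by
  unfold Phi
  have : 0 ≤ t/(1+t) := by positivity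
  linarith

lemma Phi_le {t : ℝ} (ht : 0 ≤ t) : Phi t ≤ t := by
  have := Real.log_le_sub_one_of_pos (show 0 < 1 + t by linarith)
  linarith [Phi_le_log ht]

lemma Phi_le_sq {s : ℝ} (hs : 0 ≤ s) : Phi (s^2) ≤ 2*s := by
  have h1 := Phi_le_log (sq_nonneg s)
  have h2 : Real.log (1 + s^2) ≤ Real.log ((1+s)^2) := Real.log_le_log (by positivity) (by nlinarith)
  rw [Real.log_pow] at h2
  have := Real.log_le_sub_one_of_pos (show 0 < 1 + s by linarith)
  push_cast at h2
  linarith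

lemma Phi_measurable : Measurable Phi := by unfold Phi; fun_prop

lemma HH_measurable (x : E4) : Measurable (HH x) := by
  unfold HH
  exact Phi_measurable.comp (by fun_prop)

lemma HHarg_nonneg {x y : E4} (hx : x ∈ cB) (hy : y ∈ cB) :
    0 ≤ (1 - ‖x‖^2) * (1 - ‖y‖^2) / ‖x - y‖^2 := by
  have hx : ‖x‖ ≤ 1 := by simpa using hx
  have hy : ‖y‖ ≤ 1 := by simpa using hy
  have : 0 ≤ 1 - ‖x‖^2 := by nlinarith [norm_nonneg x]
  have : 0 ≤ 1 - ‖y‖^2 := by nlinarith [norm_nonneg y]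
  positivity

lemma HHarg_le {x y : E4} (hx : x ∈ cB) (hy : y ∈ cB) :
    (1 - ‖x‖^2) * (1 - ‖y‖^2) / ‖x - y‖^2 ≤ (‖x - y‖⁻¹)^2 := by
  have hx : ‖x‖ ≤ 1 := by simpa using hx
  have hy : ‖y‖ ≤ 1 := by simpa using hy
  have : 0 ≤ 1 - ‖x‖^2 := by nlinarith [norm_nonneg x]
  have : 0 ≤ 1 - ‖y‖^2 := by nlinarith [norm_nonneg y]
  rw [div_eq_mul_inv, inv_pow]
  have h3 : (1 - ‖x‖^2) * (1 - ‖y‖^2) ≤ 1 := by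
    nlinarith [sq_nonneg ‖x‖, sq_nonneg ‖y‖]
  have h4 : 0 ≤ (‖x-y‖^2)⁻¹ := by positivity
  nlinarith

lemma HH_nonneg {x y : E4} (hx : x ∈ cB) (hy : y ∈ cB) : 0 ≤ HH x y := Phi_nonneg (HHarg_nonneg hx hy)

lemma HH_le {x y : E4} (hx : x ∈ cB) (hy : y ∈ cB) : HH x y ≤ 2 * ‖x-y‖⁻¹ :=
  (Phi_mono.monotoneOn (HHarg_nonneg hx hy) (sq_nonneg (‖x-y‖⁻¹)) (HHarg_le hx hy)).trans
    (Phi_le_sq (by positivity))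

lemma HH_le' {x y : E4} (hx : x ∈ cB) (hy : y ∈ cB) : HH x y ≤ (‖x-y‖^2)⁻¹ := by
  have := (Phi_le (HHarg_nonneg hx hy)).trans (HHarg_le hx hy)
  rwa [inv_pow] at this

lemma int_d2 (r : ℝ) : IntegrableOn (fun z : E4 => (‖z‖^2)⁻¹) (ball 0 r) := by
  have := (integrableOn_fun_norm_addHaar (E := E4) (F := ℝ) volume (f := fun s => (s^2)⁻¹) (r := r)).2 ?_
  · exact this
  · rw [finrank_euclideanSpace_fin]
    have : IntegrableOn (fun y : ℝ => y) (Ioo 0 r) := 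
      (continuous_id.continuousOn.integrableOn_compact (isCompact_Icc (a := 0) (b := r))).mono_set Ioo_subset_Icc_self
    refine this.congr_fun ?_ measurableSet_Ioo
    intro y hy
    have : y ≠ 0 := hy.1.ne'
    simp
    field_simp

lemma trans_d2 {x : E4} (hx : x ∈ cB) : IntegrableOn (fun y : E4 => (‖x-y‖^2)⁻¹) oB ∧
    ∫ y in oB, (‖x-y‖^2)⁻¹ ≤ ∫ z in ball (0:E4) 2, (‖z‖^2)⁻¹ := by
  have hx : ‖x‖ ≤ 1 := by simpa using hx
  have mp := (Measure.measurePreserving_sub_left (volume : Measure E4) x)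
  have me : MeasurableEmbedding (fun y : E4 => x - y) := (Homeomorph.subLeft x).measurableEmbedding
  have hpre : (fun y : E4 => x - y) ⁻¹' (ball 0 2) = ball x 2 := by
    ext y; simp [dist_eq_norm, norm_sub_rev]
  have hsub : oB ⊆ ball x 2 := by
    apply ball_subset_ball'
    rw [dist_zero_left]; linarith
  have hi : IntegrableOn (fun y : E4 => (‖x-y‖^2)⁻¹) (ball x 2) := by
    have := (mp.integrableOn_comp_preimage me (f := fun z : E4 => (‖z‖^2)⁻¹) (s := ball 0 2)).2 (int_d2 2)
    rw [hpre] at this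
    exact this
  refine ⟨hi.mono_set hsub, ?_⟩
  have h2 := mp.setIntegral_preimage_emb me (fun z : E4 => (‖z‖^2)⁻¹) (ball 0 2)
  rw [hpre] at h2
  rw [← h2]
  exact setIntegral_mono_set hi (Eventually.of_forall fun y => by positivity) hsub.eventuallyLE

lemma vreg_eq {x : E4} {al be ep : ℝ} (hb : be = ‖x‖^2 + ep + 1 - al) (hep : 0 < ep) (hal : al < 1) {y : E4} (hy : y ∈ cB) :
    vreg x al be ep y = Phi ((1 - al) * (1 - ‖y‖^2) / (‖x-y‖^2 + ep)) := by
  have hy : ‖y‖ ≤ 1 := by simpa using hy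
  have : 0 ≤ 1 - ‖y‖^2 := by nlinarith [norm_nonneg y]
  have h1 : 0 ≤ (1 - al) * (1 - ‖y‖^2) := mul_nonneg (by linarith) this
  have hq : 0 < ‖x-y‖^2 + ep := by positivity
  rw [vreg, Qq hb, q_eq, Phi]
  have : quad (-1) 0 1 y = 1 - ‖y‖^2 := by simp [quad]; ring
  rw [this]
  generalize ‖x-y‖^2 + ep = q at *
  have e1 : 1 + (1 - al) * (1 - ‖y‖^2) / q = (q + (1 - al) * (1 - ‖y‖^2)) / q := by field_simp
  have hQ : 0 < q + (1 - al) * (1 - ‖y‖^2) := by linarith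
  rw [e1, Real.log_div hQ.ne' hq.ne']
  field_simp
  ring

lemma greenreg {x : E4} {al be ep : ℝ} (hab : al * be = ‖x‖^2) (hb : be = ‖x‖^2 + ep + 1 - al)
    (hep : 0 < ep) (hal : al < 1) {u f : E4 → ℝ} (hu : ContDiffOn ℝ 4 u cB)
    (hu0 : ∀ x : E4, ‖x‖ = 1 → u x = 0 ∧ fderivWithin ℝ u cB x = 0)
    (hf : ∀ x ∈ oB, lap (lap u) x = f x) :
    ∫ y in oB, Phi ((1 - al) * (1 - ‖y‖^2) / (‖x-y‖^2 + ep)) * f y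
      = ∫ y in oB, u y * (96 * ep^2 / (‖x-y‖^2 + ep)^4) := by
  have hq : ∀ y : E4, 0 < quad 1 ((-2:ℝ)•x) (‖x‖^2+ep) y := by intro y; rw [q_eq]; positivity
  have hQ : ∀ y ∈ cB, 0 < quad al ((-2:ℝ)•x) be y := by
    intro y hy
    rw [Qq hb]
    have hy : ‖y‖ ≤ 1 := by simpa using hy
    have : 0 ≤ 1 - ‖y‖^2 := by nlinarith [norm_nonneg y]
    have := mul_nonneg (show 0 ≤ 1 - al by linarith) this
    linarith [hq y]
  have hv : ContDiffOn ℝ 4 (vreg x al be ep) cB := fun y hy =>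
    (vreg_contDiffAt (hQ y hy) (hq y)).contDiffWithinAt
  have := green2 hv hu (fun y hy => vreg_bdry hb hep hy) hu0
  rw [← setIntegral_congr_fun measurableSet_ball (f := fun y => vreg x al be ep y * lap (lap u) y), this]
  · refine setIntegral_congr_fun measurableSet_ball (fun y hy => ?_)
    rw [vreg_lap2 hab (hQ y (ball_subset_closedBall hy)) (hq y), q_eq]
  · intro y hy
    simp only []
    rw [vreg_eq hb hep hal (ball_subset_closedBall hy), hf y hy]

lemma int_jap : Integrable (fun z : E4 => ((1 + ‖z‖^2)^4)⁻¹) := by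
  have := integrable_rpow_neg_one_add_norm_sq (E := E4) (μ := volume) (r := 8) (by rw [finrank_euclideanSpace_fin]; norm_num)
  refine this.congr (Eventually.of_forall fun z => ?_)
  simp only []
  rw [show (-8/2 : ℝ) = -((4:ℕ):ℝ) by norm_num, Real.rpow_neg (by positivity), Real.rpow_natCast]

/-- normalising constant -/
def cJ : ℝ := ∫ z : E4, ((1 + ‖z‖^2)^4)⁻¹

lemma cJ_pos : 0 < cJ := by
  unfold cJ
  rw [integral_pos_iff_support_of_nonneg (fun z => by positivity) int_jap]
  have : Function.support (fun z : E4 => ((1 + ‖z‖^2)^4)⁻¹) = univ := by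
    ext z; simp; positivity
  rw [this]
  simp

lemma peak {u : E4 → ℝ} (hu : ContinuousOn u cB) {x : E4} (hx : x ∈ oB) :
    Tendsto (fun c : ℝ => ∫ y in oB, u y * (c^4 * ((1 + ‖c•(x-y)‖^2)^4)⁻¹)) atTop (𝓝 (cJ * u x)) := by
  have h0 := cJ_pos
  have key := tendsto_integral_comp_smul_smul_of_integrable' (μ := (volume : Measure E4))
    (φ := fun z : E4 => cJ⁻¹ * ((1 + ‖z‖^2)^4)⁻¹) (g := oB.indicator u) (x₀ := x) (fun z => by positivity)
    (by rw [integral_const_mul]; exact inv_mul_cancel₀ h0.ne') ?_ ((integrable_indicator_iff measurableSet_ball).2 (integrableOn_oB hu)) ?_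
  · have := key.const_mul cJ
    rw [indicator_of_mem hx] at this
    refine this.congr (fun c => ?_)
    rw [← integral_const_mul, ← integral_indicator measurableSet_ball]
    refine integral_congr_ae (Eventually.of_forall fun y => ?_)
    simp only [finrank_euclideanSpace_fin, smul_eq_mul]
    by_cases hy : y ∈ oB
    · rw [indicator_of_mem hy, indicator_of_mem hy]
      field_simp
    · rw [indicator_of_notMem hy, indicator_of_notMem hy]; simp
  · rw [finrank_euclideanSpace_fin]
    have hl : Tendsto (fun z : E4 => cJ⁻¹ * (‖z‖^4)⁻¹) (Bornology.cobounded E4) (𝓝 0) := by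
      have : Tendsto (fun z : E4 => (‖z‖^4)⁻¹) (Bornology.cobounded E4) (𝓝 0) :=
        tendsto_inv_atTop_zero.comp ((tendsto_pow_atTop (by norm_num)).comp tendsto_norm_cobounded_atTop)
      simpa using this.const_mul cJ⁻¹
    refine squeeze_zero (fun z => by positivity) (fun z => ?_) hl
    rcases eq_or_ne z 0 with rfl | hz
    · simp
    have hz : 0 < ‖z‖ := norm_pos_iff.2 hz
    rw [mul_left_comm]
    refine mul_le_mul_of_nonneg_left ?_ (by positivity)
    rw [← div_eq_mul_inv, div_le_iff₀ (by positivity), inv_mul_eq_div, le_div_iff₀ (by positivity), ← mul_pow]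
    refine pow_le_pow_left₀ (by positivity) ?_ 4
    nlinarith
  · have : oB.indicator u =ᶠ[𝓝 x] u := by
      filter_upwards [isOpen_ball.mem_nhds hx] with y hy
      exact indicator_of_mem hy _
    exact (hu.continuousAt (oB_nhds hx)).congr this.symm

theorem rep {u f : E4 → ℝ} (hu : ContDiffOn ℝ 4 u cB)
    (hu0 : ∀ x : E4, ‖x‖ = 1 → u x = 0 ∧ fderivWithin ℝ u cB x = 0)
    (hf : ∀ x ∈ oB, lap (lap u) x = f x) (hfc : ContinuousOn f cB) {x : E4} (hx : x ∈ oB) :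
    u x = (96 * cJ)⁻¹ * ∫ y in oB, HH x y * f y := by
  have hx1 : ‖x‖ < 1 := by simpa using hx
  have hxs : ‖x‖^2 < 1 := by nlinarith [norm_nonneg x]
  set τ : ℕ → ℝ := fun n => 1 / ((n:ℝ) + 1) with hτ
  have hτp : ∀ n, 0 < τ n := fun n => by positivity
  have hτl : Tendsto τ atTop (𝓝 0) := tendsto_one_div_add_atTop_nhds_zero_nat
  set al : ℕ → ℝ := fun n => ‖x‖^2/(1 + τ n) with hal
  set ep : ℕ → ℝ := fun n => τ n * (1 - al n) with hepd
  have hal1 : ∀ n, al n < 1 := fun n => by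
    simp only [hal]; rw [div_lt_one (by linarith [hτp n])]; linarith [hτp n]
  have hal0 : ∀ n, 0 ≤ al n := fun n => by have := hτp n; simp only [hal]; positivity
  have hep : ∀ n, 0 < ep n := fun n => mul_pos (hτp n) (by linarith [hal1 n])
  have hab : ∀ n, al n * (1 + τ n) = ‖x‖^2 := fun n => by
    have := hτp n; simp only [hal]; field_simp
  have hb : ∀ n, 1 + τ n = ‖x‖^2 + ep n + 1 - al n := fun n => by
    rw [← hab n]; simp only [hepd]; ring
  have hall : Tendsto al atTop (𝓝 (‖x‖^2)) := by
    have : Tendsto al atTop (𝓝 (‖x‖^2/(1+0))) := tendsto_const_nhds.div (tendsto_const_nhds.add hτl) (by norm_num)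
    simpa using this
  have hepl : Tendsto ep atTop (𝓝 0) := by
    have : Tendsto ep atTop (𝓝 (0 * (1 - ‖x‖^2))) := hτl.mul (tendsto_const_nhds.sub hall)
    simpa using this
  have hgr := fun n => greenreg (hab n) (hb n) (hep n) (hal1 n) hu hu0 hf
  -- right-hand side
  have hR : Tendsto (fun n => ∫ y in oB, u y * (96 * (ep n)^2 / (‖x-y‖^2 + ep n)^4)) atTop (𝓝 (96 * (cJ * u x))) := by
    have hc : Tendsto (fun n => (Real.sqrt (ep n))⁻¹) atTop atTop := by
      refine tendsto_inv_nhdsGT_zero.comp (tendsto_nhdsWithin_iff.2 ⟨?_, Eventually.of_forall fun n => Real.sqrt_pos.2 (hep n)⟩)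
      have := (Real.continuous_sqrt.tendsto 0).comp hepl
      simpa [Function.comp_def] using this
    have := ((peak hu.continuousOn hx).comp hc).const_mul 96
    refine this.congr (fun n => ?_)
    simp only [Function.comp]
    rw [← integral_const_mul]
    refine integral_congr_ae (Eventually.of_forall fun y => ?_)
    simp only []
    rw [norm_smul, mul_pow, norm_inv, inv_pow, inv_pow, Real.norm_eq_abs, sq_abs,
      show Real.sqrt (ep n) ^ 4 = (Real.sqrt (ep n) ^ 2)^2 by ring, Real.sq_sqrt (hep n).le]
    have := hep n
    have : 0 < ‖x-y‖^2 + ep n := by positivity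
    have e : (1 + (ep n)⁻¹ * ‖x-y‖^2) = (‖x-y‖^2 + ep n) / ep n := by field_simp; ring
    rw [e]
    field_simp
  -- left-hand side
  obtain ⟨M, hM⟩ := (isCompact_closedBall (0:E4) 1).exists_bound_of_continuousOn hfc
  have hM0 : 0 ≤ M := (norm_nonneg _).trans (hM 0 (by simp))
  have hfm : AEStronglyMeasurable f (volume.restrict oB) := (hfc.mono ball_subset_closedBall).aestronglyMeasurable measurableSet_ball
  have hL : Tendsto (fun n => ∫ y in oB, Phi ((1 - al n) * (1 - ‖y‖^2) / (‖x-y‖^2 + ep n)) * f y) atTop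
      (𝓝 (∫ y in oB, HH x y * f y)) := by
    refine tendsto_integral_of_dominated_convergence (fun y => (‖x-y‖^2)⁻¹ * M) ?_ ?_ ?_ ?_
    · intro n
      exact (Phi_measurable.comp (by fun_prop)).aestronglyMeasurable.mul hfm
    · exact (trans_d2 (ball_subset_closedBall hx)).1.mul_const M
    · intro n
      have hxn : ∀ᵐ y ∂(volume.restrict oB), y ≠ x := ae_restrict_of_ae (by simp [ae_iff])
      filter_upwards [ae_restrict_mem measurableSet_ball, hxn] with y hy hne
      rw [norm_mul]
      have hy1 : ‖y‖ < 1 := by simpa using hy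
      have hd : 0 < ‖x-y‖^2 := by have := norm_pos_iff.2 (sub_ne_zero.2 hne.symm); positivity
      have hys : 0 ≤ 1 - ‖y‖^2 := by nlinarith [norm_nonneg y]
      have ha : 0 ≤ (1 - al n) * (1 - ‖y‖^2) := mul_nonneg (by linarith [hal1 n]) hys
      have ht : 0 ≤ (1 - al n) * (1 - ‖y‖^2) / (‖x-y‖^2 + ep n) := div_nonneg ha (by linarith [hep n])
      refine mul_le_mul ?_ (hM y (ball_subset_closedBall hy)) (norm_nonneg _) (by positivity)
      rw [Real.norm_eq_abs, abs_of_nonneg (Phi_nonneg ht)]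
      refine (Phi_le ht).trans ?_
      rw [div_eq_mul_inv]
      have h1 : (1 - al n) * (1 - ‖y‖^2) ≤ 1 := by nlinarith [hal0 n, sq_nonneg ‖y‖]
      have h2 : (‖x-y‖^2 + ep n)⁻¹ ≤ (‖x-y‖^2)⁻¹ := inv_anti₀ hd (by linarith [hep n])
      have h3 : 0 ≤ (‖x-y‖^2 + ep n)⁻¹ := inv_nonneg.2 (by linarith [hep n])
      nlinarith
    · have hxn : ∀ᵐ y ∂(volume.restrict oB), y ≠ x := ae_restrict_of_ae (by simp [ae_iff])
      filter_upwards [ae_restrict_mem measurableSet_ball, hxn] with y hy hne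
      refine Tendsto.mul_const _ ?_
      have hd : 0 < ‖x-y‖^2 := by have := norm_pos_iff.2 (sub_ne_zero.2 hne.symm); positivity
      have hc := (Phi_hasDerivAt (t := (1 - ‖x‖^2) * (1 - ‖y‖^2) / ‖x - y‖^2) (by
        linarith [HHarg_nonneg (ball_subset_closedBall hx) (ball_subset_closedBall hy)])).continuousAt
      refine hc.tendsto.comp ?_
      have : Tendsto (fun n => ‖x-y‖^2 + ep n) atTop (𝓝 (‖x-y‖^2)) := by simpa using (tendsto_const_nhds (x := ‖x-y‖^2)).add hepl
      exact ((tendsto_const_nhds.sub hall).mul_const _).div this hd.ne'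
  have heq := tendsto_nhds_unique hL (hR.congr (fun n => (hgr n).symm))
  rw [heq]
  have := cJ_pos
  field_simp

end

section

open Set Topology

/-- reflection in the hyperplane `⟨·,e⟩ = l` -/
def sg (e : E4) (l : ℝ) (x : E4) : E4 := x - (2 * (inner ℝ x e - l)) • e

/-- the cap -/
def cap (e : E4) (l : ℝ) : Set E4 := {x | x ∈ oB ∧ l < inner ℝ x e}

lemma sg_inner {e : E4} (he : ‖e‖ = 1) (l : ℝ) (x : E4) : inner ℝ (sg e l x) e = 2*l - inner ℝ x e := by
  unfold sg
  rw [inner_sub_left, inner_smul_left, real_inner_self_eq_norm_sq, he]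
  simp; ring

lemma sg_sg {e : E4} (he : ‖e‖ = 1) (l : ℝ) (x : E4) : sg e l (sg e l x) = x := by
  rw [sg, sg_inner he, sg]
  module

lemma sg_norm {e : E4} (he : ‖e‖ = 1) (l : ℝ) (x : E4) : ‖sg e l x‖^2 = ‖x‖^2 - 4*l*(inner ℝ x e - l) := by
  unfold sg
  rw [@norm_sub_sq_real, norm_smul, mul_pow, he, inner_smul_right, Real.norm_eq_abs, sq_abs]
  ring

lemma sg_dist {e : E4} (he : ‖e‖ = 1) (l : ℝ) (x y : E4) : ‖sg e l x - sg e l y‖ = ‖x - y‖ := by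
  have h : sg e l x - sg e l y = (x - y) - (2 * inner ℝ (x-y) e) • e := by
    unfold sg; rw [inner_sub_left]; module
  have h2 : ‖sg e l x - sg e l y‖^2 = ‖x-y‖^2 := by
    rw [h, @norm_sub_sq_real, norm_smul, mul_pow, he, inner_smul_right, Real.norm_eq_abs, sq_abs]
    ring
  exact (sq_eq_sq₀ (norm_nonneg _) (norm_nonneg _)).1 h2

lemma sg_dist' {e : E4} (he : ‖e‖ = 1) (l : ℝ) (x y : E4) : ‖sg e l x - y‖ = ‖x - sg e l y‖ := by
  conv_lhs => rw [← sg_sg he l y]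
  exact sg_dist he l x _

lemma sg_cross {e : E4} (he : ‖e‖ = 1) (l : ℝ) (x y : E4) :
    ‖sg e l x - y‖^2 = ‖x - y‖^2 + 4 * (inner ℝ x e - l) * (inner ℝ y e - l) := by
  have h : sg e l x - y = (x - y) - (2 * (inner ℝ x e - l)) • e := by unfold sg; module
  rw [h, @norm_sub_sq_real, norm_smul, mul_pow, he, inner_smul_right, Real.norm_eq_abs, sq_abs, inner_sub_left]
  ring

lemma sg_cont (e : E4) (l : ℝ) : Continuous (sg e l) := by unfold sg; fun_prop

/-- reflection as homeomorphism -/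
def sgH {e : E4} (he : ‖e‖ = 1) (l : ℝ) : E4 ≃ₜ E4 where
  toFun := sg e l
  invFun := sg e l
  left_inv := sg_sg he l
  right_inv := sg_sg he l
  continuous_toFun := sg_cont e l
  continuous_invFun := sg_cont e l

lemma sg_emb {e : E4} (he : ‖e‖ = 1) (l : ℝ) : MeasurableEmbedding (sg e l) := (sgH he l).measurableEmbedding

lemma sg_mp {e : E4} (he : ‖e‖ = 1) (l : ℝ) : MeasurePreserving (sg e l) volume volume := by
  have h1 := ((Submodule.reflection (ℝ ∙ e)).trans (LinearIsometryEquiv.neg ℝ)).measurePreserving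
  have h2 := measurePreserving_add_right (volume : Measure E4) ((2*l) • e)
  have := h2.comp h1
  have heq : sg e l = ((fun x => x + (2 * l) • e) ∘ ⇑((Submodule.reflection (ℝ ∙ e)).trans (LinearIsometryEquiv.neg ℝ))) := ?_
  · rw [heq]; exact this
  funext x
  simp only [Function.comp, LinearIsometryEquiv.trans_apply, LinearIsometryEquiv.coe_neg]
  rw [Submodule.reflection_singleton_apply, he, sg, real_inner_comm]
  simp
  module

lemma cap_open (e : E4) (l : ℝ) : IsOpen (cap e l) := by
  have h : IsOpen {x : E4 | l < inner ℝ x e} := isOpen_lt continuous_const (by fun_prop)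
  exact isOpen_ball.inter h

lemma cap_sub (e : E4) (l : ℝ) : cap e l ⊆ oB := fun x hx => hx.1

lemma sg_cap {e : E4} (he : ‖e‖ = 1) {l : ℝ} (hl : 0 ≤ l) {x : E4} (hx : x ∈ cap e l) : sg e l x ∈ oB := by
  have h1 : ‖x‖ < 1 := by simpa using hx.1
  have h2 := sg_norm he l x
  have h3 := mul_nonneg hl (sub_pos.2 hx.2).le
  have h4 : ‖sg e l x‖^2 < 1 := by nlinarith [norm_nonneg x]
  have : ‖sg e l x‖ < 1 := by nlinarith [norm_nonneg (sg e l x)]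
  simpa using this

/-- leftover region -/
def lft (e : E4) (l : ℝ) : Set E4 := oB \ (cap e l ∪ sg e l ⁻¹' (cap e l))

lemma lft_meas (e : E4) (l : ℝ) : MeasurableSet (lft e l) :=
  measurableSet_ball.diff ((cap_open e l).measurableSet.union ((cap_open e l).preimage (sg_cont e l)).measurableSet)

lemma lft_le {e : E4} {l : ℝ} {y : E4} (hy : y ∈ lft e l) : inner ℝ y e ≤ l := by
  by_contra h
  exact hy.2 (Or.inl ⟨hy.1, not_le.1 h⟩)

lemma sgcap_sub {e : E4} (he : ‖e‖ = 1) {l : ℝ} (hl : 0 ≤ l) : sg e l ⁻¹' (cap e l) ⊆ oB := by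
  intro y hy
  have := sg_cap he hl hy
  rwa [sg_sg he] at this

lemma cap_split {e : E4} (he : ‖e‖ = 1) {l : ℝ} (hl : 0 ≤ l) {F : E4 → ℝ} (hF : IntegrableOn F oB) :
    IntegrableOn (fun y => F y + F (sg e l y)) (cap e l) ∧ 
    ∫ y in oB, F y = (∫ y in cap e l, (F y + F (sg e l y))) + ∫ y in lft e l, F y := by
  have hm1 := (cap_open e l).measurableSet
  have hm2 := ((cap_open e l).preimage (sg_cont e l)).measurableSet
  have hdis : Disjoint (cap e l) (sg e l ⁻¹' (cap e l)) := by
    rw [Set.disjoint_left]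
    intro y h1 h2
    have := h2.2
    rw [sg_inner he] at this
    linarith [h1.2]
  have hsub : cap e l ∪ sg e l ⁻¹' (cap e l) ⊆ oB := union_subset (cap_sub e l) (sgcap_sub he hl)
  have i1 : IntegrableOn F (cap e l) := hF.mono_set (cap_sub e l)
  have i2 : IntegrableOn (fun y => F (sg e l y)) (cap e l) := by
    have := ((sg_mp he l).integrableOn_comp_preimage (sg_emb he l) (f := fun y => F (sg e l y)) (s := cap e l)).1 ?_
    · exact this
    · have : (fun y => F (sg e l y)) ∘ sg e l = F := by funext y; simp [sg_sg he]
      rw [this]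
      exact hF.mono_set (sgcap_sub he hl)
  refine ⟨i1.add i2, ?_⟩
  rw [integral_add i1 i2]
  have h1 : ∫ y in cap e l, F (sg e l y) = ∫ y in sg e l ⁻¹' (cap e l), F y := by
    have := (sg_mp he l).setIntegral_preimage_emb (sg_emb he l) (fun y => F (sg e l y)) (cap e l)
    rw [← this]
    simp only [sg_sg he]
  rw [h1, ← setIntegral_union hdis hm2 i1 (hF.mono_set (sgcap_sub he hl))]
  have := integral_diff (f := F) (hm1.union hm2) hF hsub
  rw [lft, this]
  ring

/-- integral equation -/
structure MP (K : ℝ) (u : E4 → ℝ) : Prop where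
  hK : 0 < K
  cu : ContinuousOn u cB
  rep : ∀ x ∈ oB, u x = K * ∫ y in oB, HH x y * Real.exp (u y)

variable {K : ℝ} {u : E4 → ℝ}

lemma MP.exists_bd (h : MP K u) : ∃ M, 0 < M ∧ ∀ y ∈ cB, |u y| ≤ M := by
  obtain ⟨M, hM⟩ := (isCompact_closedBall (0:E4) 1).exists_bound_of_continuousOn h.cu
  refine ⟨|M| + 1, by positivity, fun y hy => ?_⟩
  have := hM y hy
  rw [Real.norm_eq_abs] at this
  linarith [le_abs_self M]

lemma MP.int (h : MP K u) {x : E4} (hx : x ∈ cB) : IntegrableOn (fun y => HH x y * Real.exp (u y)) oB := by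
  obtain ⟨M, hM0, hM⟩ := h.exists_bd
  have hum : AEStronglyMeasurable (fun y => Real.exp (u y)) (volume.restrict oB) :=
    ((Real.continuous_exp.comp_continuousOn h.cu).mono ball_subset_closedBall).aestronglyMeasurable measurableSet_ball
  refine Integrable.mono' ((trans_d2 hx).1.mul_const (Real.exp M)) ((HH_measurable x).aestronglyMeasurable.mul hum) ?_
  filter_upwards [ae_restrict_mem measurableSet_ball] with y hy
  have hyc := ball_subset_closedBall hy
  rw [norm_mul, Real.norm_eq_abs, Real.norm_eq_abs, abs_of_nonneg (HH_nonneg hx hyc), abs_of_pos (Real.exp_pos _)]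
  exact mul_le_mul (HH_le' hx hyc) (Real.exp_le_exp.2 ((le_abs_self _).trans (hM y hyc))) (Real.exp_pos _).le (by positivity)

lemma Phi_ratio {r s t : ℝ} (hr : 1 ≤ r) (hs : 0 ≤ s) (hst : s ≤ t) :
    Phi (r*s) - Phi s ≤ Phi (r*t) - Phi t := by
  have hm : MonotoneOn (fun t => Phi (r*t) - Phi t) (Ici 0) := by
    have hd : ∀ t : ℝ, 0 ≤ t → HasDerivAt (fun t => Phi (r*t) - Phi t) ((r*t)/(1+r*t)^2 * r - t/(1+t)^2) t := by
      intro t ht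
      have : 0 ≤ r * t := mul_nonneg (by linarith) ht
      have h1 := Phi_hasDerivAt (t := r*t) (by linarith)
      have h2 : HasDerivAt (fun t : ℝ => r * t) r t := by simpa using (hasDerivAt_id t).const_mul r
      exact (h1.comp t h2).sub (Phi_hasDerivAt (by linarith))
    refine monotoneOn_of_deriv_nonneg (convex_Ici 0) (fun t ht => (hd t ht).continuousAt.continuousWithinAt) ?_ ?_
    · intro t ht
      rw [interior_Ici] at ht
      exact (hd t (le_of_lt ht)).differentiableAt.differentiableWithinAt
    · intro t ht
      rw [interior_Ici] at ht
      have ht : (0:ℝ) < t := ht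
      rw [(hd t ht.le).deriv]
      have h1 : 0 < 1 + r*t := by positivity
      have h2 : t/(1+t) ≤ r*t/(1+r*t) := by
        rw [div_le_div_iff₀ (by positivity) h1]; nlinarith
      have h3 : (t/(1+t))^2 ≤ (r*t/(1+r*t))^2 := pow_le_pow_left₀ (by positivity) h2 2
      have e : (r*t)/(1+r*t)^2 * r - t/(1+t)^2 = ((r*t/(1+r*t))^2 - (t/(1+t))^2)/t := by
        field_simp
      rw [e]
      exact div_nonneg (by linarith) ht.le
  exact hm hs (show (0:ℝ) ≤ t by linarith) hst

lemma Phi_four {P P' Y Y' a b : ℝ} (hP : 0 < P) (hPP : P ≤ P') (hY : 0 < Y) (hYY : Y ≤ Y') (ha : 0 < a) (hab : a ≤ b) :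
    Phi (P*Y/a) + Phi (P*Y'/b) ≤ Phi (P'*Y'/a) + Phi (P'*Y/b) := by
  have hb : 0 < b := by linarith
  have hP' : 0 < P' := by linarith
  have hY' : 0 < Y' := by linarith
  have m : ∀ {s t : ℝ}, 0 ≤ s → s ≤ t → Phi s ≤ Phi t := fun hs hst =>
    Phi_mono.monotoneOn hs (show (0:ℝ) ≤ _ by linarith) hst
  have h1 : Phi (P*Y/b) ≤ Phi (P'*Y/b) := m (by positivity) (by gcongr)
  have h2 : Phi (P*Y'/a) ≤ Phi (P'*Y'/a) := m (by positivity) (by gcongr)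
  have h3 := Phi_ratio (r := Y'/Y) (s := P*Y/b) (t := P*Y/a) ((one_le_div hY).2 hYY) (by positivity) (by gcongr)
  have e1 : Y'/Y * (P*Y/b) = P*Y'/b := by field_simp
  have e2 : Y'/Y * (P*Y/a) = P*Y'/a := by field_simp
  rw [e1, e2] at h3
  linarith

lemma one_sub_pos {x : E4} (hx : x ∈ oB) : 0 < 1 - ‖x‖^2 := by
  have : ‖x‖ < 1 := by simpa using hx
  nlinarith [norm_nonneg x]

lemma HH_refl_le {e : E4} (he : ‖e‖ = 1) {l : ℝ} (hl : 0 ≤ l) {x y : E4} (hx : x ∈ cap e l)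
    (hy : y ∈ oB) (hyl : inner ℝ y e ≤ l) (hne : y ≠ sg e l x) :
    HH x y ≤ HH (sg e l x) y ∧ (0 < l → HH x y < HH (sg e l x) y) := by
  have hx1 := one_sub_pos hx.1
  have hy1 := one_sub_pos hy
  have hxs := sub_pos.2 hx.2
  have hn := sg_norm he l x
  have hc := sg_cross he l x y
  have hd : 0 < ‖sg e l x - y‖^2 := by
    have := norm_pos_iff.2 (sub_ne_zero.2 hne.symm); positivity
  have hle : ‖sg e l x - y‖^2 ≤ ‖x - y‖^2 := by nlinarith
  have hd2 : 0 < ‖x-y‖^2 := by linarith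
  have hp := mul_nonneg hl hxs.le
  constructor
  · refine Phi_mono.monotoneOn (show (0:ℝ) ≤ _ by positivity) (show (0:ℝ) ≤ _ from ?_) ?_
    · exact HHarg_nonneg (ball_subset_closedBall (sg_cap he hl hx)) (ball_subset_closedBall hy)
    · have : 1 - ‖x‖^2 ≤ 1 - ‖sg e l x‖^2 := by linarith
      have : 0 < 1 - ‖sg e l x‖^2 := by linarith
      gcongr
  · intro hl0
    have hp := mul_pos hl0 hxs
    refine Phi_mono (show (0:ℝ) ≤ _ by positivity) (show (0:ℝ) ≤ _ from ?_) ?_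
    · exact HHarg_nonneg (ball_subset_closedBall (sg_cap he hl hx)) (ball_subset_closedBall hy)
    · have : 1 - ‖x‖^2 < 1 - ‖sg e l x‖^2 := by linarith
      have : 0 < 1 - ‖sg e l x‖^2 := by linarith
      calc (1 - ‖x‖^2) * (1 - ‖y‖^2) / ‖x-y‖^2 < (1 - ‖sg e l x‖^2) * (1 - ‖y‖^2) / ‖x-y‖^2 := by gcongr
        _ ≤ _ := by gcongr

lemma HH_four {e : E4} (he : ‖e‖ = 1) {l : ℝ} (hl : 0 ≤ l) {x y : E4} (hx : x ∈ cap e l)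
    (hy : y ∈ cap e l) (hne : y ≠ x) :
    HH x y + HH x (sg e l y) ≤ HH (sg e l x) (sg e l y) + HH (sg e l x) y := by
  have hx1 := one_sub_pos hx.1
  have hy1 := one_sub_pos hy.1
  have hxs := sub_pos.2 hx.2
  have hys := sub_pos.2 hy.2
  have hd : 0 < ‖x - y‖^2 := by
    have := norm_pos_iff.2 (sub_ne_zero.2 hne.symm); positivity
  unfold HH
  rw [sg_dist he, ← sg_dist' he]
  have hc := sg_cross he l x y
  refine Phi_four hx1 ?_ hy1 ?_ hd ?_
  · rw [sg_norm he]; nlinarith [mul_nonneg hl hxs.le]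
  · rw [sg_norm he]; nlinarith [mul_nonneg hl hys.le]
  · rw [hc]; nlinarith [mul_nonneg hxs.le hys.le]

end

section

open Set Topology

variable {K : ℝ} {u : E4 → ℝ}

/-- bad set -/
def bad (u : E4 → ℝ) (e : E4) (l : ℝ) : Set E4 := {y | y ∈ cap e l ∧ u (sg e l y) < u y}

lemma MP.cont (h : MP K u) : ContinuousOn u oB := h.cu.mono ball_subset_closedBall

lemma bad_open (h : MP K u) {e : E4} (he : ‖e‖ = 1) {l : ℝ} (hl : 0 ≤ l) : IsOpen (bad u e l) := by
  have hc : ContinuousOn (fun y => u y - u (sg e l y)) (cap e l) :=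
    (h.cont.mono (cap_sub e l)).sub (h.cont.comp (sg_cont e l).continuousOn (fun y hy => sg_cap he hl hy))
  have := hc.isOpen_inter_preimage (cap_open e l) (isOpen_Ioi (a := (0:ℝ)))
  convert this using 1
  ext y
  simp [bad]

/-- difference density -/
def FF (u : E4 → ℝ) (e : E4) (l : ℝ) (x y : E4) : ℝ := (HH (sg e l x) y - HH x y) * Real.exp (u y)

lemma FF_int (h : MP K u) {e : E4} (he : ‖e‖ = 1) {l : ℝ} (hl : 0 ≤ l) {x : E4} (hx : x ∈ cap e l) :
    IntegrableOn (FF u e l x) oB := by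
  have := (h.int (ball_subset_closedBall (sg_cap he hl hx))).sub (h.int (ball_subset_closedBall hx.1))
  refine this.congr (Eventually.of_forall fun y => ?_)
  simp [FF]; ring

lemma FF_eq (h : MP K u) {e : E4} (he : ‖e‖ = 1) {l : ℝ} (hl : 0 ≤ l) {x : E4} (hx : x ∈ cap e l) :
    u (sg e l x) - u x = K * ((∫ y in cap e l, (FF u e l x y + FF u e l x (sg e l y))) + ∫ y in lft e l, FF u e l x y) := by
  rw [← (cap_split he hl (FF_int h he hl hx)).2, h.rep x hx.1, h.rep _ (sg_cap he hl hx), ← mul_sub,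
    ← integral_sub (h.int (ball_subset_closedBall (sg_cap he hl hx))) (h.int (ball_subset_closedBall hx.1))]
  congr 1
  refine integral_congr_ae (Eventually.of_forall fun y => ?_)
  simp only [FF]; ring

lemma lft_ne {e : E4} (he : ‖e‖ = 1) {l : ℝ} {x y : E4} (hx : x ∈ cap e l) (hy : y ∈ lft e l) : y ≠ sg e l x := by
  rintro rfl
  exact hy.2 (Or.inr (by simpa [sg_sg he] using hx))

lemma FF_lft {e : E4} (he : ‖e‖ = 1) {l : ℝ} (hl : 0 ≤ l) {x y : E4} (hx : x ∈ cap e l) (hy : y ∈ lft e l) :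
    0 ≤ FF u e l x y ∧ (0 < l → 0 < FF u e l x y) := by
  have := HH_refl_le he hl hx hy.1 (lft_le hy) (lft_ne he hx hy)
  exact ⟨mul_nonneg (sub_nonneg.2 this.1) (Real.exp_pos _).le, fun h0 => mul_pos (sub_pos.2 (this.2 h0)) (Real.exp_pos _)⟩

lemma FF_pair {e : E4} (he : ‖e‖ = 1) {l : ℝ} (hl : 0 ≤ l) {x y : E4} (hx : x ∈ cap e l) (hy : y ∈ cap e l) (hne : y ≠ x) :
    (u y ≤ u (sg e l y) → 0 ≤ FF u e l x y + FF u e l x (sg e l y)) ∧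
    (u (sg e l y) ≤ u y → -(2 * ‖x-y‖⁻¹ * (Real.exp (u y) * (u y - u (sg e l y)))) ≤ FF u e l x y + FF u e l x (sg e l y)) := by
  have hsy := sg_cap he hl hy
  have hsx := sg_cap he hl hx
  have hle : inner ℝ (sg e l y) e ≤ l := by rw [sg_inner he]; linarith [hy.2]
  have hne' : sg e l y ≠ sg e l x := fun h => hne (by rw [← sg_sg he l y, h, sg_sg he])
  have h1 := (HH_refl_le he hl hx hsy hle hne').1
  have h4 := HH_four he hl hx hy hne
  have hb := HH_le (ball_subset_closedBall hsx) (ball_subset_closedBall hsy)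
  rw [sg_dist he] at hb
  have h0 := HH_nonneg (ball_subset_closedBall hx.1) (ball_subset_closedBall hsy)
  have ep := Real.exp_pos (u y)
  have ep' := Real.exp_pos (u (sg e l y))
  unfold FF
  constructor
  · intro hu
    have := Real.exp_le_exp.2 hu
    nlinarith [mul_nonneg (sub_nonneg.2 h1) (sub_nonneg.2 this)]
  · intro hu
    have e1 := Real.exp_le_exp.2 hu
    have e2 : Real.exp (u y) - Real.exp (u (sg e l y)) ≤ Real.exp (u y) * (u y - u (sg e l y)) := by
      have := Real.add_one_le_exp (u (sg e l y) - u y)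
      have h5 : Real.exp (u (sg e l y)) = Real.exp (u y) * Real.exp (u (sg e l y) - u y) := by
        rw [← Real.exp_add]; congr 1; ring
      rw [h5]
      nlinarith
    have h6 : (HH (sg e l x) (sg e l y) - HH x (sg e l y)) * (Real.exp (u y) - Real.exp (u (sg e l y)))
        ≤ 2 * ‖x-y‖⁻¹ * (Real.exp (u y) * (u y - u (sg e l y))) :=
      mul_le_mul (by linarith) e2 (by linarith) (by positivity)
    nlinarith

lemma lft_pos {e : E4} (he : ‖e‖ = 1) {l : ℝ} (hl : 0 < l) (hl1 : l < 1) : 0 < volume (lft e l) := by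
  have ho : IsOpen (oB ∩ {y : E4 | inner ℝ y e < 2*l-1}) := by
    have h : IsOpen {x : E4 | inner ℝ x e < 2*l-1} := isOpen_lt (by fun_prop) continuous_const
    exact isOpen_ball.inter h
  have hne : (oB ∩ {y : E4 | inner ℝ y e < 2*l-1}).Nonempty := by
    refine ⟨(-(1-l)) • e, ?_, ?_⟩
    · rw [mem_ball_zero_iff, norm_smul, he, Real.norm_eq_abs, abs_neg, abs_of_pos (by linarith)]; linarith
    · rw [mem_setOf_eq, inner_smul_left, real_inner_self_eq_norm_sq, he]; simp; linarith
  refine (ho.measure_pos volume hne).trans_le (measure_mono ?_)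
  rintro y ⟨hy, hy2⟩
  have hy2 : inner ℝ y e < 2*l-1 := hy2
  refine ⟨hy, ?_⟩
  rintro (h1 | h1)
  · linarith [h1.2]
  · have h2 : ‖sg e l y‖ < 1 := by simpa using h1.1
    have h3 := real_inner_le_norm (sg e l y) e
    rw [sg_inner he, he] at h3
    linarith

lemma strict (h : MP K u) {e : E4} (he : ‖e‖ = 1) {l : ℝ} (hl : 0 < l)
    (hP : ∀ x ∈ cap e l, u x ≤ u (sg e l x)) {x : E4} (hx : x ∈ cap e l) : u x < u (sg e l x) := by
  have hl1 : l < 1 := by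
    have h1 : ‖x‖ < 1 := by simpa using hx.1
    have h3 := real_inner_le_norm x e
    rw [he] at h3
    linarith [hx.2]
  have h1 : 0 ≤ ∫ y in cap e l, (FF u e l x y + FF u e l x (sg e l y)) := by
    refine integral_nonneg_of_ae ?_
    have hxn : ∀ᵐ y ∂(volume.restrict (cap e l)), y ≠ x := ae_restrict_of_ae (by simp [ae_iff])
    filter_upwards [ae_restrict_mem (cap_open e l).measurableSet, hxn] with y hy hne
    exact (FF_pair he hl.le hx hy hne).1 (hP y hy)
  have h2 : 0 < ∫ y in lft e l, FF u e l x y := by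
    rw [setIntegral_pos_iff_support_of_nonneg_ae]
    · have : Function.support (FF u e l x) ∩ lft e l = lft e l := by
        refine inter_eq_right.2 (fun y hy => ?_)
        exact ((FF_lft he hl.le hx hy).2 hl).ne'
      rw [this]
      exact lft_pos he hl hl1
    · filter_upwards [ae_restrict_mem (lft_meas e l)] with y hy
      exact (FF_lft he hl.le hx hy).1
    · exact (FF_int h he hl.le hx).mono_set diff_subset
  have := FF_eq h he hl.le hx
  have := mul_pos h.hK (add_pos_of_nonneg_of_pos h1 h2)
  linarith

lemma d1_bound {x : E4} (hx : x ∈ cB) {A : Set E4} (hA : MeasurableSet A) (hAs : A ⊆ oB) {s : ℝ} (hs : 0 < s) :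
    IntegrableOn (fun y => ‖x-y‖⁻¹) A ∧ 
    ∫ y in A, ‖x-y‖⁻¹ ≤ s/2 * (∫ z in ball (0:E4) 2, (‖z‖^2)⁻¹) + volume.real A / (2*s) := by
  have hfin : volume A ≠ ⊤ := (lt_of_le_of_lt (measure_mono hAs) measure_ball_lt_top).ne
  have i1 : IntegrableOn (fun y : E4 => s/2 * (‖x-y‖^2)⁻¹) A := ((trans_d2 hx).1.mono_set hAs).const_mul _
  have i2 : IntegrableOn (fun _ : E4 => 1/(2*s)) A := integrableOn_const hfin
  have hpt : ∀ y, ‖x-y‖⁻¹ ≤ s/2 * (‖x-y‖^2)⁻¹ + 1/(2*s) := by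
    intro y
    rw [← inv_pow]
    generalize ‖x-y‖⁻¹ = t
    have : s/2*t^2 + 1/(2*s) - t = (s*t-1)^2/(2*s) := by field_simp; ring
    have : 0 ≤ (s*t-1)^2/(2*s) := by positivity
    linarith
  have i3 : IntegrableOn (fun y => ‖x-y‖⁻¹) A := by
    refine Integrable.mono' (i1.add i2) (by fun_prop) (Eventually.of_forall fun y => ?_)
    rw [Real.norm_eq_abs, abs_of_nonneg (by positivity)]
    exact hpt y
  refine ⟨i3, ?_⟩
  calc ∫ y in A, ‖x-y‖⁻¹ ≤ ∫ y in A, (s/2 * (‖x-y‖^2)⁻¹ + 1/(2*s)) := integral_mono i3 (i1.add i2) hpt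
    _ = s/2 * (∫ y in A, (‖x-y‖^2)⁻¹) + volume.real A / (2*s) := by
      rw [integral_add i1 i2, integral_const_mul, setIntegral_const, smul_eq_mul]; ring
    _ ≤ _ := by
      have h1 : ∫ y in A, (‖x-y‖^2)⁻¹ ≤ ∫ y in oB, (‖x-y‖^2)⁻¹ :=
        setIntegral_mono_set (trans_d2 hx).1 (Eventually.of_forall fun y => by positivity) hAs.eventuallyLE
      have := h1.trans (trans_d2 hx).2
      have := mul_le_mul_of_nonneg_left this (show 0 ≤ s/2 by positivity)
      linarith

set_option maxHeartbeats 1000000 in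
lemma narrow (h : MP K u) : ∃ δ > 0, ∀ e : E4, ‖e‖ = 1 → ∀ l : ℝ, 0 ≤ l → volume.real (bad u e l) < δ → bad u e l = ∅ := by
  obtain ⟨M, hM0, hM⟩ := h.exists_bd
  set K2 := ∫ z in ball (0:E4) 2, (‖z‖^2)⁻¹ with hK2
  have hK20 : 0 ≤ K2 := integral_nonneg (fun z => by positivity)
  set E := Real.exp M with hE
  have hE0 : 0 < E := Real.exp_pos M
  have hKp := h.hK
  set s := 1/(4*K*E*(K2+1)) with hs
  have hs0 : 0 < s := by positivity
  clear_value K2 E s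
  refine ⟨s/(4*K*E), by positivity, ?_⟩
  intro e he l hl hvol
  by_contra hne
  obtain ⟨x0, hx0⟩ := nonempty_iff_ne_empty.2 hne
  set A := bad u e l with hA
  have hAsub : A ⊆ cap e l := fun y hy => hy.1
  have hAo := bad_open h he hl
  set w : E4 → ℝ := fun y => u y - u (sg e l y) with hw
  have hbdd : BddAbove (w '' A) := by
    refine ⟨2*M, ?_⟩
    rintro _ ⟨y, hy, rfl⟩
    have h1 := abs_le.1 (hM y (ball_subset_closedBall hy.1.1))
    have h2 := abs_le.1 (hM _ (ball_subset_closedBall (sg_cap he hl hy.1)))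
    simp only [hw]; linarith
  set W := sSup (w '' A) with hW
  have hwW : ∀ y ∈ A, w y ≤ W := fun y hy => le_csSup hbdd (mem_image_of_mem _ hy)
  have hWpos : 0 < W := lt_of_lt_of_le (sub_pos.2 hx0.2) (hwW x0 hx0)
  have hsmall : K * E * (s * K2 + volume.real A / s) ≤ 1/2 := by
    have h1 : K * E * (s * K2) ≤ 1/4 := by
      rw [hs, show K * E * (1/(4*K*E*(K2+1)) * K2) = (1/4) * (K2/(K2+1)) by field_simp]
      have : K2/(K2+1) ≤ 1 := (div_le_one (by positivity)).2 (by linarith)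
      linarith
    have h2 : K * E * (volume.real A / s) ≤ 1/4 := by
      have : volume.real A / s ≤ 1/(4*K*E) := by
        rw [div_le_iff₀ hs0]
        refine hvol.le.trans (le_of_eq ?_)
        ring
      calc K * E * (volume.real A / s) ≤ K * E * (1/(4*K*E)) := by gcongr
        _ = 1/4 := by field_simp
    linarith
  have hmain : ∀ x ∈ A, w x ≤ W/2 := by
    intro x hx
    have hxc := hx.1
    have heq := FF_eq h he hl hxc
    have hd := d1_bound (ball_subset_closedBall hxc.1) hAo.measurableSet (hAsub.trans (cap_sub e l)) hs0
    rw [← hK2] at hd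
    have hlft : 0 ≤ ∫ y in lft e l, FF u e l x y :=
      setIntegral_nonneg (lft_meas e l) (fun y hy => (FF_lft he hl hxc hy).1)
    have hcap : -(2*E*W) * ∫ y in A, ‖x-y‖⁻¹ ≤ ∫ y in cap e l, (FF u e l x y + FF u e l x (sg e l y)) := by
      rw [← integral_const_mul, ← integral_indicator hAo.measurableSet, ← integral_indicator (cap_open e l).measurableSet]
      refine integral_mono_ae ((integrable_indicator_iff hAo.measurableSet).2 (hd.1.const_mul _))
        ((integrable_indicator_iff (cap_open e l).measurableSet).2 (cap_split he hl (FF_int h he hl hxc)).1) ?_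
      have hxn : ∀ᵐ y ∂(volume : Measure E4), y ≠ x := by simp [ae_iff]
      filter_upwards [hxn] with y hne
      by_cases hy : y ∈ cap e l
      · rw [indicator_of_mem hy]
        by_cases hyA : y ∈ A
        · rw [indicator_of_mem hyA]
          refine le_trans ?_ ((FF_pair he hl hxc hy hne).2 hyA.2.le)
          have h1 : Real.exp (u y) * (u y - u (sg e l y)) ≤ E * W :=
            mul_le_mul (hE ▸ Real.exp_le_exp.2 (abs_le.1 (hM y (ball_subset_closedBall hy.1))).2) (hwW y hyA)
              (sub_nonneg.2 hyA.2.le) hE0.le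
          have h2 : 0 ≤ ‖x-y‖⁻¹ := by positivity
          nlinarith
        · rw [indicator_of_notMem hyA]
          refine (FF_pair he hl hxc hy hne).1 ?_
          by_contra hlt
          exact hyA ⟨hy, not_le.1 hlt⟩
      · rw [indicator_of_notMem hy, indicator_of_notMem (fun hh => hy (hAsub hh))]
    have h3 : -(w x) ≥ K * (-(2*E*W) * ∫ y in A, ‖x-y‖⁻¹) := by
      have : -(w x) = u (sg e l x) - u x := by simp [hw]
      rw [this, heq]
      exact mul_le_mul_of_nonneg_left (by linarith) hKp.le
    have h4 : K * (2*E*W) * (∫ y in A, ‖x-y‖⁻¹) ≤ K * (2*E*W) * (s/2 * K2 + volume.real A / (2*s)) :=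
      mul_le_mul_of_nonneg_left hd.2 (by positivity)
    have h5 : K * (2*E*W) * (s/2 * K2 + volume.real A / (2*s)) = W * (K * E * (s * K2 + volume.real A / s)) := by
      field_simp
    have h6 := mul_le_mul_of_nonneg_left hsmall hWpos.le
    nlinarith
  have : W ≤ W/2 := csSup_le ⟨_, mem_image_of_mem _ hx0⟩ (by rintro _ ⟨y, hy, rfl⟩; exact hmain y hy)
  linarith

end

section

open Set Topology

variable {K : ℝ} {u : E4 → ℝ}

lemma hyper_null {e : E4} (he : ‖e‖ = 1) (l : ℝ) : volume {y : E4 | inner ℝ y e = l} = 0 := by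
  have h0 : (volume : Measure E4) ((LinearMap.ker (innerSL ℝ e : E4 →L[ℝ] ℝ).toLinearMap : Submodule ℝ E4) : Set E4) = 0 := by
    refine Measure.addHaar_submodule _ _ (fun h => ?_)
    have : e ∈ LinearMap.ker (innerSL ℝ e : E4 →L[ℝ] ℝ).toLinearMap := by rw [h]; trivial
    have h2 : inner ℝ e e = (0:ℝ) := by simpa using this
    rw [real_inner_self_eq_norm_sq, he] at h2
    norm_num at h2
  have h1 : {y : E4 | inner ℝ y e = l} = (fun y => y + (-(l • e))) ⁻¹' ((LinearMap.ker (innerSL ℝ e : E4 →L[ℝ] ℝ).toLinearMap : Submodule ℝ E4) : Set E4) := by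
    ext y
    simp only [mem_setOf_eq, mem_preimage, SetLike.mem_coe, LinearMap.mem_ker]
    have : (innerSL ℝ e : E4 →L[ℝ] ℝ).toLinearMap (y + -(l • e)) = inner ℝ y e - l := by
      change inner ℝ e (y + -(l • e)) = _
      rw [inner_add_right, inner_neg_right, inner_smul_right, real_inner_self_eq_norm_sq, he, real_inner_comm]
      ring
    rw [this, sub_eq_zero]
  rw [h1, measure_preimage_add_right, h0]

lemma sg_cont_l (e x : E4) : Continuous (fun l => sg e l x) := by unfold sg; fun_prop

lemma bad_empty_iff {e : E4} {l : ℝ} : bad u e l = ∅ ↔ ∀ x ∈ cap e l, u x ≤ u (sg e l x) := by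
  constructor
  · intro h x hx
    by_contra hc
    push Not at hc
    have : x ∈ bad u e l := ⟨hx, hc⟩
    rw [h] at this
    exact this
  · intro h
    ext x
    simp only [bad, mem_setOf_eq, mem_empty_iff_false, iff_false, not_and, not_lt]
    exact h x

lemma cont_at_l (h : MP K u) {e : E4} (he : ‖e‖ = 1) {l : ℝ} (hl : 0 ≤ l) {x : E4} (hx : x ∈ cap e l) :
    ContinuousAt (fun l' => u (sg e l' x)) l := by
  have h1 : ContinuousAt u (sg e l x) := h.cont.continuousAt (isOpen_ball.mem_nhds (sg_cap he hl hx))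
  exact ContinuousAt.comp (f := fun l' => sg e l' x) h1 (sg_cont_l e x).continuousAt

lemma moving (h : MP K u) {e : E4} (he : ‖e‖ = 1) : ∀ x ∈ cap e 0, u x ≤ u (sg e 0 x) := by
  set s : Set ℝ := {ν | bad u e (1 - ν) = ∅} with hs
  obtain ⟨δ, hδ, hn⟩ := narrow h
  have key : Icc (0:ℝ) 1 ⊆ s := by
    refine IsClosed.Icc_subset_of_forall_mem_nhdsWithin ?_ ?_ ?_
    · rw [← isSeqClosed_iff_isClosed]
      intro a ν ha hν
      have hν1 : ν ∈ Icc (0:ℝ) 1 := isClosed_Icc.mem_of_tendsto hν (Eventually.of_forall fun n => (ha n).2)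
      refine ⟨?_, hν1⟩
      show bad u e (1 - ν) = ∅
      rw [bad_empty_iff]
      intro x hx
      have hl : Tendsto (fun n => 1 - a n) atTop (𝓝 (1 - ν)) := hν.const_sub 1
      have h1 := (cont_at_l h he (sub_nonneg.2 hν1.2) hx).tendsto.comp hl
      refine ge_of_tendsto h1 ?_
      filter_upwards [hl.eventually_lt_const hx.2] with n hn
      exact bad_empty_iff.1 (ha n).1 x ⟨hx.1, hn⟩
    · show bad u e (1 - 0) = ∅
      rw [bad_empty_iff]
      intro x hx
      exfalso
      have h1 : ‖x‖ < 1 := by simpa using hx.1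
      have h2 := real_inner_le_norm x e
      have h3 := hx.2
      rw [he] at h2
      linarith
    · rintro ν ⟨hνs, hν0, hν1⟩
      have hνs' : bad u e (1 - ν) = ∅ := hνs
      rw [bad_empty_iff] at hνs'
      have hl0 : 0 < 1 - ν := by linarith
      have hlim : Tendsto (fun i : ℝ => max (1 - i) 0) (𝓝[>] ν) (𝓝 (1 - ν)) := by
        have : ContinuousAt (fun i : ℝ => max (1 - i) 0) ν := by fun_prop
        have h2 := this.tendsto
        simp only [max_eq_left hl0.le] at h2
        exact h2.mono_left nhdsWithin_le_nhds
      have ht : Tendsto (fun i : ℝ => volume (bad u e (max (1 - i) 0))) (𝓝[>] ν) (𝓝 (volume (∅ : Set E4))) := by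
        refine tendsto_measure_of_ae_tendsto_indicator (𝓝[>] ν) MeasurableSet.empty
          (fun i => (bad_open h he (le_max_right _ _)).measurableSet) (B := oB) measurableSet_ball
          measure_ball_lt_top.ne (Eventually.of_forall fun i y hy => hy.1.1) ?_
        have hae : ∀ᵐ y : E4, inner ℝ y e ≠ 1 - ν := by
          rw [ae_iff]; simpa using hyper_null he (1 - ν)
        filter_upwards [hae] with y hy
        have hev : ∀ᶠ i in 𝓝[>] ν, y ∉ bad u e (max (1 - i) 0) := by
          by_cases hyB : y ∈ oB
          · rcases lt_or_gt_of_ne hy with hlt | hgt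
            · filter_upwards [hlim.eventually_const_lt hlt] with i hi hb
              exact absurd hb.1.2 (not_lt.2 hi.le)
            · have hyc : y ∈ cap e (1 - ν) := ⟨hyB, hgt⟩
              have h1 := strict h he hl0 hνs' hyc
              have h2 := (cont_at_l h he hl0.le hyc).tendsto.comp hlim
              filter_upwards [h2.eventually_const_lt h1] with i hi hb
              exact absurd hb.2 (not_lt.2 (le_of_lt hi))
          · exact Eventually.of_forall fun i hb => hyB hb.1.1
        filter_upwards [hev] with i hi
        simpa using hi
      rw [measure_empty] at ht
      have h3 : ∀ᶠ i in 𝓝[>] ν, volume (bad u e (max (1 - i) 0)) < ENNReal.ofReal δ :=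
        ht.eventually_lt_const (by simpa using hδ)
      have h4 : ∀ᶠ i in 𝓝[>] ν, 0 < 1 - i := by
        have : Tendsto (fun i : ℝ => 1 - i) (𝓝[>] ν) (𝓝 (1 - ν)) := by
          have : ContinuousAt (fun i : ℝ => 1 - i) ν := by fun_prop
          exact this.tendsto.mono_left nhdsWithin_le_nhds
        exact this.eventually_const_lt hl0
      filter_upwards [h3, h4] with i hi1 hi2
      rw [max_eq_left hi2.le] at hi1
      refine hn e he _ hi2.le ?_
      rw [Measure.real]
      exact (ENNReal.toReal_lt_of_lt_ofReal hi1)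
  have := key (right_mem_Icc.2 zero_le_one)
  have h1 : bad u e (1 - 1) = ∅ := this
  rw [sub_self] at h1
  exact bad_empty_iff.1 h1

lemma radial_le (h : MP K u) {x y : E4} (hx : x ∈ oB) (hxy : ‖x‖ = ‖y‖) : u x ≤ u y := by
  by_cases hne : x = y
  · rw [hne]
  have hd : 0 < ‖x - y‖ := norm_pos_iff.2 (sub_ne_zero.2 hne)
  set e : E4 := ‖x - y‖⁻¹ • (x - y) with he'
  have he : ‖e‖ = 1 := by rw [he', norm_smul, norm_inv, norm_norm, inv_mul_cancel₀ hd.ne']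
  have hi : 2 * inner ℝ x (x - y) = ‖x - y‖^2 := by
    rw [@norm_sub_sq_real, inner_sub_right, real_inner_self_eq_norm_sq, hxy]; ring
  have hi2 : inner ℝ x e = ‖x - y‖ / 2 := by
    rw [he', inner_smul_right]
    have : inner ℝ x (x - y) = ‖x - y‖^2 / 2 := by linarith
    rw [this]; field_simp
  have h1 := moving h he x ⟨hx, by rw [hi2]; positivity⟩
  have h2 : sg e 0 x = y := by
    rw [sg, hi2, he', smul_smul]
    have : 2 * (‖x - y‖ / 2 - 0) * ‖x - y‖⁻¹ = 1 := by field_simp; ring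
    rw [this]; simp
  rwa [h2] at h1

theorem radial (h : MP K u) {x y : E4} (hx : x ∈ oB) (hxy : ‖x‖ = ‖y‖) : u x = u y := by
  have hy : y ∈ oB := by
    have : ‖x‖ < 1 := by simpa using hx
    simpa [← hxy] using this
  exact le_antisymm (radial_le h hx hxy) (radial_le h hy hxy.symm)

end

section

open Set Topology

lemma mono_of_deriv {f f' : ℝ → ℝ} {b : ℝ} (hc : ContinuousOn f (Iic b))
    (hd : ∀ t < b, HasDerivAt f (f' t) t) (hp : ∀ t < b, 0 ≤ f' t) :
    ∀ s t, s ≤ t → t ≤ b → f s ≤ f t := by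
  have : MonotoneOn f (Iic b) := by
    apply monotoneOn_of_deriv_nonneg (convex_Iic b) hc
    · intro t ht
      rw [interior_Iic] at ht
      exact (hd t ht).differentiableAt.differentiableWithinAt
    · intro t ht
      rw [interior_Iic] at ht
      rw [(hd t ht).deriv]
      exact hp t ht
  intro s t hst htb
  exact this (le_trans hst htb) htb hst

lemma mono_on_Icc {f f' : ℝ → ℝ} {a b : ℝ} (hc : ContinuousOn f (Icc a b))
    (hd : ∀ t, a < t → t < b → HasDerivAt f (f' t) t)
    (hp : ∀ t, a < t → t < b → 0 ≤ f' t) :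
    ∀ s t, a ≤ s → s ≤ t → t ≤ b → f s ≤ f t := by
  have : MonotoneOn f (Icc a b) := by
    apply monotoneOn_of_deriv_nonneg (convex_Icc a b) hc
    · intro t ht
      rw [interior_Icc] at ht
      exact (hd t ht.1 ht.2).differentiableAt.differentiableWithinAt
    · intro t ht
      rw [interior_Icc] at ht
      rw [(hd t ht.1 ht.2).deriv]
      exact hp t ht.1 ht.2
  intro s t h1 hst htb
  exact this ⟨h1, by linarith⟩ ⟨by linarith, htb⟩ hst

lemma lim_le_of_deriv {f f' : ℝ → ℝ} {b L : ℝ} (hc : ContinuousOn f (Iic b))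
    (hd : ∀ t < b, HasDerivAt f (f' t) t) (hp : ∀ t < b, 0 ≤ f' t)
    (hl : Tendsto f atBot (𝓝 L)) : ∀ t ≤ b, L ≤ f t := by
  intro t ht
  refine le_of_tendsto hl ?_
  filter_upwards [eventually_le_atBot t] with s hs
  exact mono_of_deriv hc hd hp s t hs ht

lemma tendsto_exp_two_atBot (c : ℝ) : Tendsto (fun t : ℝ => Real.exp (2 * (t - c))) atBot (𝓝 0) := by
  refine Real.tendsto_exp_atBot.comp ?_
  refine Tendsto.const_mul_atBot (by norm_num) ?_
  exact tendsto_atBot_add_const_right _ (-c) tendsto_id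

lemma tendsto_exp_two_atBot' : Tendsto (fun t : ℝ => Real.exp (2 * t)) atBot (𝓝 0) := by
  simpa using tendsto_exp_two_atBot 0

lemma hasDerivAt_exp_two (c t : ℝ) :
    HasDerivAt (fun t : ℝ => Real.exp (2 * (t - c))) (2 * Real.exp (2 * (t - c))) t := by
  have h : HasDerivAt (fun t : ℝ => 2 * (t - c)) 2 t := by
    simpa using ((hasDerivAt_id t).sub_const c).const_mul 2
  simpa [mul_comm] using h.exp

lemma hasDerivAt_exp_two' (t : ℝ) :
    HasDerivAt (fun t : ℝ => Real.exp (2 * t)) (2 * Real.exp (2 * t)) t := by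
  simpa using hasDerivAt_exp_two 0 t

lemma hasDerivAt_exp_neg_two (t : ℝ) :
    HasDerivAt (fun t : ℝ => Real.exp (-2 * t)) (-2 * Real.exp (-2 * t)) t := by
  have h : HasDerivAt (fun t : ℝ => -2 * t) (-2) t := by
    simpa using (hasDerivAt_id t).const_mul (-2)
  simpa [mul_comm] using h.exp

/-- The radial problem in the logarithmic variable. -/
structure RadODE (C lam N : ℝ) (V A B m : ℝ → ℝ) : Prop where
  hlam : 0 < lam
  cV : ContinuousOn V (Iic 0)
  cA : ContinuousOn A (Iic 0)
  cB : ContinuousOn B (Iic 0)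
  cm : ContinuousOn m (Iic 0)
  dV : ∀ t < 0, HasDerivAt V (-(A t + B t) / 4) t
  dA : ∀ t < 0, HasDerivAt A (2 * A t - m t) t
  dB : ∀ t < 0, HasDerivAt B (m t - 2 * B t) t
  dm : ∀ t < 0, HasDerivAt m (lam * Real.exp (4 * t + V t)) t
  V0 : V 0 = 0
  AB0 : A 0 + B 0 = 0
  lV : Tendsto V atBot (𝓝 N)
  lA : Tendsto A atBot (𝓝 0)
  lB : Tendsto B atBot (𝓝 0)
  lm : Tendsto m atBot (𝓝 0)
  mC : ∀ t ≤ 0, m t ≤ C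

namespace RadODE
variable {C lam N : ℝ} {V A B m : ℝ → ℝ}

lemma m_mono (h : RadODE C lam N V A B m) : ∀ s t, s ≤ t → t ≤ 0 → m s ≤ m t :=
  mono_of_deriv h.cm h.dm (fun t _ => by have := h.hlam; positivity)

lemma m_nonneg (h : RadODE C lam N V A B m) : ∀ t ≤ 0, 0 ≤ m t :=
  lim_le_of_deriv h.cm h.dm (fun t _ => by have := h.hlam; positivity) h.lm

lemma C_nonneg (h : RadODE C lam N V A B m) : 0 ≤ C := (h.m_nonneg 0 le_rfl).trans (h.mC 0 le_rfl)

lemma B_nonneg (h : RadODE C lam N V A B m) : ∀ t ≤ 0, 0 ≤ B t := by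
  intro t ht
  have h1 : (0:ℝ) ≤ Real.exp (2 * t) * B t := by
    refine lim_le_of_deriv (f := fun t => Real.exp (2 * t) * B t)
      (f' := fun t => Real.exp (2 * t) * m t) (b := 0) ?_ ?_ ?_ ?_ t ht
    · exact (by fun_prop : Continuous fun t : ℝ => Real.exp (2 * t)).continuousOn.mul h.cB
    · intro t ht
      have := (hasDerivAt_exp_two' t).mul (h.dB t ht)
      refine this.congr_deriv ?_
      try simp only [Pi.add_apply, Pi.sub_apply, Pi.mul_apply, Pi.neg_apply]
      ring
    · intro t ht
      exact mul_nonneg (Real.exp_pos _).le (h.m_nonneg t ht.le)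
    · simpa using tendsto_exp_two_atBot'.mul h.lB
  exact nonneg_of_mul_nonneg_right h1 (Real.exp_pos _)

lemma B_le (h : RadODE C lam N V A B m) : ∀ t ≤ 0, B t ≤ m t / 2 := by
  intro t ht
  have h1 : (0:ℝ) ≤ Real.exp (2 * t) * (m t / 2 - B t) := by
    refine lim_le_of_deriv (f := fun t => Real.exp (2 * t) * (m t / 2 - B t))
      (f' := fun t => Real.exp (2 * t) * (lam * Real.exp (4 * t + V t)) / 2) (b := 0) ?_ ?_ ?_ ?_ t ht
    · exact (by fun_prop : Continuous fun t : ℝ => Real.exp (2 * t)).continuousOn.mul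
        ((h.cm.div_const _).sub h.cB)
    · intro t ht
      have := (hasDerivAt_exp_two' t).mul (((h.dm t ht).div_const 2).sub (h.dB t ht))
      refine this.congr_deriv ?_
      try simp only [Pi.add_apply, Pi.sub_apply, Pi.mul_apply, Pi.neg_apply]
      ring
    · intro t ht
      have := h.hlam
      positivity
    · simpa using tendsto_exp_two_atBot'.mul ((h.lm.div_const 2).sub h.lB)
  linarith [nonneg_of_mul_nonneg_right h1 (Real.exp_pos _)]

lemma A_zero (h : RadODE C lam N V A B m) : A 0 ≤ 0 := by
  linarith [h.AB0, h.B_nonneg 0 le_rfl]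

/-- local upper bound for `A`. -/
lemma A_le_aux (h : RadODE C lam N V A B m) {κ t2 : ℝ} (ht2 : t2 ≤ 0) (hκ : m t2 ≤ κ) :
    ∀ t ≤ t2, A t - κ / 2 ≤ Real.exp (2 * (t - t2)) * (A t2 - κ / 2) := by
  intro t ht
  have := mono_of_deriv (f := fun t => Real.exp (-2 * t) * (A t - κ / 2))
      (f' := fun t => Real.exp (-2 * t) * (κ - m t)) (b := t2) ?_ ?_ ?_ t t2 ht le_rfl
  · have e1 : Real.exp (2 * (t - t2)) = Real.exp (2 * t) * Real.exp (-2 * t2) := by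
      rw [← Real.exp_add]; ring_nf
    have e2 : Real.exp (2 * t) * Real.exp (-2 * t) = 1 := by
      rw [← Real.exp_add]; simp
    calc A t - κ / 2 = Real.exp (2 * t) * (Real.exp (-2 * t) * (A t - κ / 2)) := by
          rw [← mul_assoc, e2, one_mul]
      _ ≤ Real.exp (2 * t) * (Real.exp (-2 * t2) * (A t2 - κ / 2)) := by
          gcongr
      _ = _ := by rw [e1]; ring
  · exact (by fun_prop : Continuous fun t : ℝ => Real.exp (-2 * t)).continuousOn.mul
        ((h.cA.mono (Iic_subset_Iic.2 ht2)).sub continuousOn_const)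
  · intro t ht
    have := (hasDerivAt_exp_neg_two t).mul ((h.dA t (ht.trans_le ht2)).sub_const (κ / 2))
    refine this.congr_deriv ?_
    try simp only [Pi.add_apply, Pi.sub_apply, Pi.mul_apply, Pi.neg_apply]
    ring
  · intro t ht
    refine mul_nonneg (Real.exp_pos _).le ?_
    linarith [h.m_mono t t2 ht.le ht2]

lemma A_le (h : RadODE C lam N V A B m) : ∀ t ≤ 0, A t ≤ C / 2 := by
  intro t ht
  have h1 := h.A_le_aux le_rfl (h.mC 0 le_rfl) t ht
  have h2 : Real.exp (2 * (t - 0)) * (A 0 - C / 2) ≤ 0 := by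
    refine mul_nonpos_of_nonneg_of_nonpos (Real.exp_pos _).le ?_
    linarith [h.A_zero, h.C_nonneg]
  linarith

lemma A_le_loc (h : RadODE C lam N V A B m) {κ t2 : ℝ} (ht2 : t2 ≤ 0) (hκ : m t2 ≤ κ) :
    ∀ t ≤ t2, A t ≤ κ / 2 + Real.exp (2 * (t - t2)) * (C / 2) := by
  intro t ht
  have h1 := h.A_le_aux ht2 hκ t ht
  have h2 : Real.exp (2 * (t - t2)) * (A t2 - κ / 2) ≤ Real.exp (2 * (t - t2)) * (C / 2) := by
    gcongr
    linarith [h.A_le t2 ht2, h.m_nonneg t2 ht2]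
  linarith

/-- `p = (A+B)/4` is nonnegative. -/
lemma p_nonneg (h : RadODE C lam N V A B m) : ∀ t ≤ 0, 0 ≤ A t + B t := by
  intro t ht
  have := mono_of_deriv (f := fun t => -(Real.exp (-2 * t) * (A t + B t)))
      (f' := fun t => Real.exp (-2 * t) * (4 * B t)) (b := 0) ?_ ?_ ?_ t 0 ht le_rfl
  · rw [h.AB0] at this
    simp only [mul_zero, neg_zero] at this
    have h1 : 0 ≤ Real.exp (-2 * t) * (A t + B t) := by linarith
    exact nonneg_of_mul_nonneg_right h1 (Real.exp_pos _)
  · exact ((by fun_prop : Continuous fun t : ℝ => Real.exp (-2 * t)).continuousOn.mul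
        (h.cA.add h.cB)).neg
  · intro t ht
    have := ((hasDerivAt_exp_neg_two t).mul ((h.dA t ht).add (h.dB t ht))).neg
    refine this.congr_deriv ?_
    try simp only [Pi.add_apply, Pi.sub_apply, Pi.mul_apply, Pi.neg_apply]
    ring
  · intro t ht
    exact mul_nonneg (Real.exp_pos _).le (by linarith [h.B_nonneg t ht.le])

lemma energy (h : RadODE C lam N V A B m) : ∀ t ≤ 0,
    lam * Real.exp (4 * t + V t) = 4 * m t - m t * (A t + B t) / 4 + A t * B t / 2 := by
  have hd : ∀ t < 0, HasDerivAt (fun t => 4 * m t - m t * (A t + B t) / 4 + A t * B t / 2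
      - lam * Real.exp (4 * t + V t)) 0 t := by
    intro t ht
    have hw : HasDerivAt (fun t => 4 * t + V t) (4 + -(A t + B t) / 4) t := by
      exact (((hasDerivAt_id t).const_mul 4).add (h.dV t ht)).congr_deriv (by ring)
    have := ((((h.dm t ht).const_mul 4).sub (((h.dm t ht).mul
      ((h.dA t ht).add (h.dB t ht))).div_const 4)).add
      (((h.dA t ht).mul (h.dB t ht)).div_const 2)).sub (hw.exp.const_mul lam)
    refine this.congr_deriv ?_
    try simp only [Pi.add_apply, Pi.sub_apply, Pi.mul_apply, Pi.neg_apply]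
    ring
  have hc : ContinuousOn (fun t => 4 * m t - m t * (A t + B t) / 4 + A t * B t / 2
      - lam * Real.exp (4 * t + V t)) (Iic 0) := by
    have := h.cm; have := h.cA; have := h.cB; have := h.cV
    fun_prop
  have hl : Tendsto (fun t => 4 * m t - m t * (A t + B t) / 4 + A t * B t / 2
      - lam * Real.exp (4 * t + V t)) atBot (𝓝 0) := by
    have e : Tendsto (fun t => Real.exp (4 * t + V t)) atBot (𝓝 0) := by
      refine Real.tendsto_exp_atBot.comp ?_
      exact (Tendsto.const_mul_atBot (by norm_num) tendsto_id).atBot_add h.lV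
    have := (((h.lm.const_mul 4).sub ((h.lm.mul (h.lA.add h.lB)).div_const 4)).add
      ((h.lA.mul h.lB).div_const 2)).sub (e.const_mul lam)
    simpa using this
  intro t ht
  have h1 := lim_le_of_deriv hc hd (fun _ _ => le_rfl) hl t ht
  have h2 := lim_le_of_deriv hc.neg (fun t ht => (hd t ht).neg) (fun _ _ => by simp) hl.neg t ht
  simp only [neg_zero, Pi.neg_apply] at h2
  linarith

lemma g_le (h : RadODE C lam N V A B m) : ∀ t ≤ 0,
    lam * Real.exp (4 * t + V t) ≤ 4 * C + C ^ 2 / 8 := by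
  intro t ht
  rw [h.energy t ht]
  have h1 := h.mC t ht
  have h2 := mul_nonneg (h.m_nonneg t ht) (h.p_nonneg t ht)
  have h3 : A t * B t ≤ C / 2 * (C / 2) := by
    have hB := h.B_nonneg t ht
    have hB' := h.B_le t ht
    have hA := h.A_le t ht
    have hC := h.C_nonneg
    calc A t * B t ≤ C / 2 * B t := by gcongr
      _ ≤ _ := by gcongr; linarith
  nlinarith

lemma V_le (h : RadODE C lam N V A B m) : ∀ t ≤ 0, V t ≤ C / 4 * (-t) := by
  intro t ht
  have := mono_of_deriv (f := fun t => V t + C / 4 * t)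
      (f' := fun t => -(A t + B t) / 4 + C / 4) (b := 0) ?_ ?_ ?_ t 0 ht le_rfl
  · rw [h.V0] at this
    linarith
  · exact h.cV.add (by fun_prop)
  · intro t ht
    exact ((h.dV t ht).add ((hasDerivAt_id t).const_mul (C / 4))).congr_deriv (by ring)
  · intro t ht
    linarith [h.A_le t ht.le, h.B_le t ht.le, h.mC t ht.le]

lemma V_anti (h : RadODE C lam N V A B m) : ∀ s t, s ≤ t → t ≤ 0 → V t ≤ V s := by
  intro s t hst ht
  have := mono_of_deriv (f := fun t => - V t) (f' := fun t => -(-(A t + B t) / 4))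
    h.cV.neg (fun t ht => (h.dV t ht).neg)
    (fun t ht => by linarith [h.p_nonneg t ht.le]) s t hst ht
  linarith

lemma V_le_N (h : RadODE C lam N V A B m) : ∀ t ≤ 0, V t ≤ N := by
  intro t ht
  refine ge_of_tendsto h.lV ?_
  filter_upwards [eventually_le_atBot t] with s hs
  exact h.V_anti s t hs ht

/-- combination with clean derivative -/
lemma dX (h : RadODE C lam N V A B m) : ∀ t < 0,
    HasDerivAt (fun t => V t + (A t - B t) / 8) (-m t / 4) t := by
  intro t ht
  have := (h.dV t ht).add (((h.dA t ht).sub (h.dB t ht)).div_const 8)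
  refine this.congr_deriv ?_
  try simp only [Pi.add_apply, Pi.sub_apply, Pi.mul_apply, Pi.neg_apply]
  ring

lemma cX (h : RadODE C lam N V A B m) : ContinuousOn (fun t => V t + (A t - B t) / 8) (Iic 0) := by
  have := h.cA; have := h.cB; have := h.cV
  fun_prop

end RadODE

end

section

open Set Topology

lemma abs_sub_le_of_deriv {f f' : ℝ → ℝ} {S c : ℝ} (hc : ContinuousOn f (Icc (-S) 0))
    (hd : ∀ t, -S < t → t < 0 → HasDerivAt f (f' t) t)
    (hp : ∀ t, -S < t → t < 0 → |f' t| ≤ c) :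
    ∀ t, -S ≤ t → t ≤ 0 → |f t - f 0| ≤ c * (-t) := by
  intro t h1 h2
  have a1 := mono_on_Icc (f := fun t => f t + c * t) (f' := fun t => f' t + c)
    (hc.add (by fun_prop))
    (fun t h1 h2 => ((hd t h1 h2).add ((hasDerivAt_id t).const_mul c)).congr_deriv (by ring))
    (fun t h1 h2 => by linarith [(abs_le.1 (hp t h1 h2)).1]) t 0 h1 h2 le_rfl
  have a2 := mono_on_Icc (f := fun t => c * t - f t) (f' := fun t => c - f' t)
    (ContinuousOn.sub (by fun_prop) hc)
    (fun t h1 h2 => (((hasDerivAt_id t).const_mul c).sub (hd t h1 h2)).congr_deriv (by ring))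
    (fun t h1 h2 => by linarith [(abs_le.1 (hp t h1 h2)).2]) t 0 h1 h2 le_rfl
  simp only [mul_zero] at a1 a2
  rw [abs_le]
  constructor <;> linarith

namespace RadODE
variable {C lam N : ℝ} {V A B m : ℝ → ℝ}

/-- auxiliary constant -/
def KK (C : ℝ) : ℝ := (4 * C + C ^ 2 / 8) * Real.exp (C / 16)

lemma N_le_of_small (h : RadODE C lam N V A B m) {t1 : ℝ} (ht1 : t1 ≤ 0) (hm : m t1 ≤ 8) :
    N ≤ C / 4 * (-t1) + C / 16 + KK C / 16 := by
  have hsub : Iic t1 ⊆ Iic (0:ℝ) := Iic_subset_Iic.2 ht1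
  have hp : ∀ t ≤ t1, (A t + B t) / 4 ≤ 2 + C / 8 * Real.exp (2 * (t - t1)) := by
    intro t ht
    have h1 := h.A_le_loc ht1 hm t ht
    have h2 := h.B_le t (ht.trans ht1)
    have h3 := h.m_mono t t1 ht ht1
    linarith
  have hK : 0 ≤ KK C := by
    have := h.C_nonneg
    unfold KK; positivity
  -- bound for the density
  have hg : ∀ t ≤ t1, lam * Real.exp (4 * t + V t) ≤ KK C * Real.exp (2 * (t - t1)) := by
    intro t ht
    have hw : 4 * t + V t - 2 * t + C / 16 * Real.exp (2 * (t - t1))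
        ≤ 4 * t1 + V t1 - 2 * t1 + C / 16 * Real.exp (2 * (t1 - t1)) := by
      refine mono_of_deriv (f := fun t => 4 * t + V t - 2 * t + C / 16 * Real.exp (2 * (t - t1)))
        (f' := fun t => 2 - (A t + B t) / 4 + C / 8 * Real.exp (2 * (t - t1))) (b := t1) ?_ ?_ ?_
        t t1 ht le_rfl
      · have := h.cV.mono hsub
        fun_prop
      · intro t ht
        have := ((((hasDerivAt_id t).const_mul 4).add (h.dV t (ht.trans_le ht1))).sub
          ((hasDerivAt_id t).const_mul 2)).add ((hasDerivAt_exp_two t1 t).const_mul (C / 16))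
        exact this.congr_deriv (by ring)
      · intro t ht
        linarith [hp t ht.le]
    have hC := h.C_nonneg
    have e0 : 0 ≤ C / 16 * Real.exp (2 * (t - t1)) := by positivity
    have hw2 : 4 * t + V t ≤ (4 * t1 + V t1) + C / 16 + 2 * (t - t1) := by
      simp only [sub_self, mul_zero, Real.exp_zero] at hw
      linarith
    calc lam * Real.exp (4 * t + V t)
        ≤ lam * Real.exp ((4 * t1 + V t1) + C / 16 + 2 * (t - t1)) := by
          have := h.hlam
          gcongr
      _ = (lam * Real.exp (4 * t1 + V t1)) * Real.exp (C / 16) * Real.exp (2 * (t - t1)) := by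
          rw [Real.exp_add, Real.exp_add]; ring
      _ ≤ (4 * C + C ^ 2 / 8) * Real.exp (C / 16) * Real.exp (2 * (t - t1)) := by
          gcongr
          exact h.g_le t1 ht1
      _ = _ := by unfold KK; ring
  have hmb : ∀ t ≤ t1, m t ≤ KK C / 2 * Real.exp (2 * (t - t1)) := by
    intro t ht
    have : 0 ≤ KK C / 2 * Real.exp (2 * (t - t1)) - m t := by
      refine lim_le_of_deriv (f := fun t => KK C / 2 * Real.exp (2 * (t - t1)) - m t)
        (f' := fun t => KK C * Real.exp (2 * (t - t1)) - lam * Real.exp (4 * t + V t)) (b := t1)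
        ?_ ?_ ?_ ?_ t ht
      · have := h.cm.mono hsub
        fun_prop
      · intro t ht
        exact (((hasDerivAt_exp_two t1 t).const_mul (KK C / 2)).sub
          (h.dm t (ht.trans_le ht1))).congr_deriv (by ring)
      · intro t ht
        linarith [hg t ht.le]
      · simpa using ((tendsto_exp_two_atBot t1).const_mul (KK C / 2)).sub h.lm
    linarith
  have hX : N ≤ V t1 + (A t1 - B t1) / 8 + KK C / 16 * Real.exp (2 * (t1 - t1)) := by
    refine lim_le_of_deriv
      (f := fun t => V t + (A t - B t) / 8 + KK C / 16 * Real.exp (2 * (t - t1)))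
      (f' := fun t => -m t / 4 + KK C / 8 * Real.exp (2 * (t - t1))) (b := t1)
        ?_ ?_ ?_ ?_ t1 le_rfl
    · exact (h.cX.mono hsub).add (by fun_prop)
    · intro t ht
      exact ((h.dX t (ht.trans_le ht1)).add
        ((hasDerivAt_exp_two t1 t).const_mul (KK C / 16))).congr_deriv (by ring)
    · intro t ht
      linarith [hmb t ht.le]
    · simpa using (h.lV.add ((h.lA.sub h.lB).div_const 8)).add
        ((tendsto_exp_two_atBot t1).const_mul (KK C / 16))
  simp only [sub_self, mul_zero, Real.exp_zero] at hX
  linarith [h.V_le t1 ht1, h.A_le t1 ht1, h.B_nonneg t1 ht1]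

lemma g_ge_of (m A B : ℝ) (h8 : 8 ≤ m) (h24 : m ≤ 24) (hA : A ≤ 13) (hB : 0 ≤ B)
    (hB' : B ≤ m / 2) : 6 ≤ 4 * m - m * (A + B) / 4 + A * B / 2 := by
  by_cases hc : m / 2 ≤ A
  · nlinarith [mul_nonneg hB (sub_nonneg.2 hc), mul_nonneg (by linarith : 0 ≤ m) (sub_nonneg.2 hA)]
  · push Not at hc
    nlinarith [mul_nonneg (sub_nonneg.2 hB') (sub_nonneg.2 hc.le), mul_nonneg (by linarith : 0 ≤ m)
      (sub_nonneg.2 h24)]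

lemma N_le_of_mid (h : RadODE C lam N V A B m) {t2 : ℝ} (ht2 : t2 ≤ 0) (hm : m t2 ≤ 24) :
    N ≤ C / 4 * (-t2 + C / 4 + 4) + C / 16 + KK C / 16 := by
  have hC := h.C_nonneg
  set t1 := t2 - C / 4 - 4 with ht1
  have ht10 : t1 ≤ 0 := by linarith
  by_cases h8 : m t1 ≤ 8
  · have := h.N_le_of_small ht10 h8
    rw [ht1] at this
    linarith
  · exfalso
    push Not at h8
    have := mono_on_Icc (f := fun t => m t - 6 * t)
      (f' := fun t => lam * Real.exp (4 * t + V t) - 6) (a := t1) (b := t2 - C / 4) ?_ ?_ ?_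
      t1 (t2 - C / 4) le_rfl (by linarith) le_rfl
    · have h3 := h.m_mono (t2 - C / 4) t2 (by linarith) ht2
      simp only [ht1] at this h8
      linarith
    · have := h.cm.mono (fun t (ht : t ∈ Icc t1 (t2 - C / 4)) =>
        (by have := ht.2; simp only [mem_Iic]; linarith : t ∈ Iic (0:ℝ)))
      fun_prop
    · intro t h1 h2
      exact ((h.dm t (by linarith)).sub ((hasDerivAt_id t).const_mul 6)).congr_deriv (by ring)
    · intro t h1 h2
      have ht0 : t ≤ 0 := by linarith
      rw [h.energy t ht0]
      have a1 := h.m_mono t1 t h1.le ht0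
      have a2 := h.m_mono t t2 (by linarith) ht2
      have a3 := h.A_le_loc ht2 hm t (by linarith)
      have a4 : Real.exp (2 * (t - t2)) * (C / 2) ≤ 1 := by
        have e1 : Real.exp (2 * (t - t2)) ≤ Real.exp (-(C / 2)) := by
          apply Real.exp_le_exp.2; linarith
        have e2 : Real.exp (-(C / 2)) * Real.exp (C / 2) = 1 := by
          rw [← Real.exp_add]; simp
        have e3 : C / 2 ≤ Real.exp (C / 2) := by linarith [Real.add_one_le_exp (C / 2)]
        calc _ ≤ Real.exp (-(C / 2)) * Real.exp (C / 2) := by gcongr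
          _ = 1 := e2
      have := g_ge_of (m t) (A t) (B t) (by linarith) (by linarith) (by linarith)
        (h.B_nonneg t ht0) (h.B_le t ht0)
      linarith

lemma lam_le_of (h : RadODE C lam N V A B m) {T : ℝ} (hT : 0 ≤ T)
    (hm : ∀ t, -T ≤ t → t ≤ 0 → 24 ≤ m t) :
    lam ≤ (4 * C + C ^ 2 / 8) * Real.exp (C / 4) * Real.exp (-2 * T) := by
  have hC := h.C_nonneg
  have h1 := mono_on_Icc (f := fun t => -(V t + (A t - B t) / 8) - 6 * t)
      (f' := fun t => -(-m t / 4) - 6) (a := -T) (b := 0) ?_ ?_ ?_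
      (-T) 0 le_rfl (by linarith) le_rfl
  · have hA := h.A_le (-T) (by linarith)
    have hB := h.B_nonneg (-T) (by linarith)
    have hB0 := h.B_le 0 le_rfl
    have hm0 := h.mC 0 le_rfl
    have hAB := h.AB0
    have hV0 := h.V0
    have hV : 6 * T - C / 4 ≤ V (-T) := by
      have : A 0 = - B 0 := by linarith
      rw [hV0, this] at h1
      linarith
    have hg := h.g_le (-T) (by linarith)
    have e1 : Real.exp (2 * T - C / 4) ≤ Real.exp (4 * -T + V (-T)) :=
      Real.exp_le_exp.2 (by linarith)
    have e2 : lam * Real.exp (2 * T - C / 4) ≤ 4 * C + C ^ 2 / 8 :=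
      (mul_le_mul_of_nonneg_left e1 h.hlam.le).trans hg
    have e3 : Real.exp (2 * T - C / 4) * (Real.exp (C / 4) * Real.exp (-2 * T)) = 1 := by
      rw [← Real.exp_add, ← Real.exp_add, ← Real.exp_zero]; congr 1; ring
    calc lam = (lam * Real.exp (2 * T - C / 4)) * (Real.exp (C / 4) * Real.exp (-2 * T)) := by
          rw [mul_assoc, e3, mul_one]
      _ ≤ (4 * C + C ^ 2 / 8) * (Real.exp (C / 4) * Real.exp (-2 * T)) := by gcongr
      _ = _ := by ring
  · have := h.cX.mono (Icc_subset_Iic_self : Icc (-T) 0 ⊆ Iic 0)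
    exact this.neg.sub (by fun_prop)
  · intro t h1 h2
    exact ((h.dX t h2).neg.sub ((hasDerivAt_id t).const_mul 6)).congr_deriv (by ring)
  · intro t h1 h2
    linarith [hm t h1.le h2.le]

/-- stability of the linear system -/
lemma V_close (h : RadODE C lam N V A B m) {S η : ℝ} (hS : 0 ≤ S) (hη : 0 ≤ η)
    (hm : ∀ t, -S ≤ t → t ≤ 0 → |m t - 32| ≤ η) (hB : |B 0 - 16| ≤ η) :
    ∀ t, -S ≤ t → t ≤ 0 → |V t - (-8 * t - 4 + 4 * Real.exp (2 * t))| ≤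
      S * ((1 + Real.exp (2 * S) * S) + Real.exp (2 * S) * (1 + S)) * η := by
  have hsub : Icc (-S) 0 ⊆ Iic (0:ℝ) := Icc_subset_Iic_self
  have cA := h.cA.mono hsub
  have cB := h.cB.mono hsub
  have cV := h.cV.mono hsub
  have hA : ∀ t, -S ≤ t → t ≤ 0 → |A t - (16 - 32 * Real.exp (2 * t))| ≤
      (1 + Real.exp (2 * S) * S) * η := by
    intro t h1 h2
    have := abs_sub_le_of_deriv (f := fun t => Real.exp (-2 * t) * (A t - 16))
      (f' := fun t => -(Real.exp (-2 * t) * (m t - 32))) (S := S) (c := Real.exp (2 * S) * η)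
      (by fun_prop) ?_ ?_ t h1 h2
    · simp only [mul_zero, Real.exp_zero, one_mul] at this
      have e2 : Real.exp (2 * t) * Real.exp (-2 * t) = 1 := by
        rw [← Real.exp_add]; simp
      have e4 : Real.exp (2 * t) ≤ 1 := Real.exp_le_one_iff.2 (by linarith)
      have e3 : A t - (16 - 32 * Real.exp (2 * t)) = Real.exp (2 * t) *
          ((Real.exp (-2 * t) * (A t - 16) - (A 0 - 16)) + (16 - B 0)) := by
        have : A 0 = - B 0 := by linarith [h.AB0]
        rw [this]
        linear_combination (A t - 16) * (-e2)
      rw [e3, abs_mul, abs_of_pos (Real.exp_pos _)]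
      have e5 : |Real.exp (-2 * t) * (A t - 16) - (A 0 - 16) + (16 - B 0)| ≤
          (1 + Real.exp (2 * S) * S) * η := by
        refine (abs_add_le _ _).trans ?_
        rw [abs_sub_comm 16]
        have : Real.exp (2 * S) * η * -t ≤ Real.exp (2 * S) * η * S := by
          gcongr; linarith
        linarith
      calc _ ≤ 1 * |Real.exp (-2 * t) * (A t - 16) - (A 0 - 16) + (16 - B 0)| := by gcongr
        _ ≤ _ := by rw [one_mul]; exact e5
    · intro t h1 h2
      exact ((hasDerivAt_exp_neg_two t).mul ((h.dA t h2).sub_const 16)).congr_deriv (by ring)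
    · intro t h1 h2
      rw [abs_neg, abs_mul, abs_of_pos (Real.exp_pos _)]
      have := hm t h1.le h2.le
      have : Real.exp (-2 * t) ≤ Real.exp (2 * S) := Real.exp_le_exp.2 (by linarith)
      gcongr
  have hB : ∀ t, -S ≤ t → t ≤ 0 → |B t - 16| ≤ (Real.exp (2 * S) * (1 + S)) * η := by
    intro t h1 h2
    have := abs_sub_le_of_deriv (f := fun t => Real.exp (2 * t) * (B t - 16))
      (f' := fun t => (Real.exp (2 * t) * (m t - 32))) (S := S) (c := η)
      (by fun_prop) ?_ ?_ t h1 h2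
    · simp only [mul_zero, Real.exp_zero, one_mul] at this
      have e2 : Real.exp (-2 * t) * Real.exp (2 * t) = 1 := by
        rw [← Real.exp_add]; simp
      have e4 : Real.exp (-2 * t) ≤ Real.exp (2 * S) := Real.exp_le_exp.2 (by linarith)
      have e3 : B t - 16 = Real.exp (-2 * t) *
          ((Real.exp (2 * t) * (B t - 16) - (B 0 - 16)) + (B 0 - 16)) := by
        linear_combination (B t - 16) * (-e2)
      rw [e3, abs_mul, abs_of_pos (Real.exp_pos _)]
      have e5 : |Real.exp (2 * t) * (B t - 16) - (B 0 - 16) + (B 0 - 16)| ≤ (1 + S) * η := by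
        refine (abs_add_le _ _).trans ?_
        have : η * -t ≤ η * S := by
          gcongr; linarith
        linarith
      calc _ ≤ Real.exp (2 * S) * ((1 + S) * η) := by gcongr
        _ = _ := by ring
    · intro t h1 h2
      exact ((hasDerivAt_exp_two' t).mul ((h.dB t h2).sub_const 16)).congr_deriv (by ring)
    · intro t h1 h2
      rw [abs_mul, abs_of_pos (Real.exp_pos _)]
      have := hm t h1.le h2.le
      have e4 : Real.exp (2 * t) ≤ 1 := Real.exp_le_one_iff.2 (by linarith)
      calc _ ≤ 1 * η := by gcongr
        _ = η := one_mul _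
  intro t h1 h2
  set c := (1 + Real.exp (2 * S) * S) + Real.exp (2 * S) * (1 + S) with hc
  have := abs_sub_le_of_deriv (f := fun t => V t - (-8 * t - 4 + 4 * Real.exp (2 * t)))
      (f' := fun t => -(A t + B t) / 4 - (-8 + 8 * Real.exp (2 * t))) (S := S) (c := c * η)
      (by fun_prop) ?_ ?_ t h1 h2
  · simp only [h.V0] at this
    norm_num at this
    have h3 : c * η * -t ≤ c * η * S := by
      have : 0 ≤ c := by positivity
      gcongr; linarith
    rw [neg_mul]
    linarith
  · intro t h1 h2
    exact ((h.dV t h2).sub (((((hasDerivAt_id t).const_mul (-8)).sub_const 4)).add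
      ((hasDerivAt_exp_two' t).const_mul 4))).congr_deriv (by ring)
  · intro t h1 h2
    have a1 := hA t h1.le h2.le
    have a2 := hB t h1.le h2.le
    have : -(A t + B t) / 4 - (-8 + 8 * Real.exp (2 * t)) =
      -((A t - (16 - 32 * Real.exp (2 * t))) + (B t - 16)) / 4 := by ring
    rw [this, abs_div, abs_neg]
    have := abs_add_le (A t - (16 - 32 * Real.exp (2 * t))) (B t - 16)
    have h4 : |(4:ℝ)| = 4 := by norm_num
    have h5 := abs_nonneg (A t - (16 - 32 * Real.exp (2 * t)) + (B t - 16))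
    rw [h4, hc]
    linarith

/-- closeness of the mass to 32 -/
lemma mass_close (h : RadODE C lam N V A B m) {T : ℝ} (hT : 0 ≤ T) (h24 : 24 ≤ m 0) :
    32 - lam ≤ m 0 ∧ m 0 ≤ 32 + 4 * (lam * T * Real.exp (C / 4 * T) + Real.exp (-2 * T) * C) ∧
    B 0 ≤ m 0 / 2 ∧ m 0 / 2 - (lam * T * Real.exp (C / 4 * T) + Real.exp (-2 * T) * C) ≤ B 0 ∧
    ∀ t, -T ≤ t → t ≤ 0 → m 0 - lam * T * Real.exp (C / 4 * T) ≤ m t := by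
  have hC := h.C_nonneg
  have hl := h.hlam
  have hB1 := h.B_le 0 le_rfl
  have hB0 := h.B_nonneg 0 le_rfl
  have hmC := h.mC 0 le_rfl
  have en := h.energy 0 le_rfl
  rw [h.V0, h.AB0, show A 0 = - B 0 by linarith [h.AB0]] at en
  simp only [mul_zero, add_zero, Real.exp_zero, mul_one, zero_div, sub_zero] at en
  set E := lam * T * Real.exp (C / 4 * T) with hE
  have hE0 : 0 ≤ E := by positivity
  have hmt : ∀ t, -T ≤ t → t ≤ 0 → m 0 - E ≤ m t := by
    intro t h1 h2
    have h3 : m 0 - lam * Real.exp (C / 4 * T) * 0 ≤ m t - lam * Real.exp (C / 4 * T) * t := by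
      have := mono_on_Icc (f := fun t => -(m t - lam * Real.exp (C / 4 * T) * t))
        (f' := fun t => -(lam * Real.exp (4 * t + V t) - lam * Real.exp (C / 4 * T)))
        (a := -T) (b := 0) ?_ ?_ ?_ t 0 h1 h2 le_rfl
      · linarith
      · have := h.cm.mono (Icc_subset_Iic_self : Icc (-T) 0 ⊆ Iic 0)
        fun_prop
      · intro t h1 h2
        exact ((h.dm t h2).sub ((hasDerivAt_id t).const_mul _)).neg.congr_deriv (by ring)
      · intro t h1 h2
        have : Real.exp (4 * t + V t) ≤ Real.exp (C / 4 * T) := by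
          apply Real.exp_le_exp.2
          have a := h.V_le t h2.le
          have b : C / 4 * -t ≤ C / 4 * T := by gcongr; linarith
          linarith
        have := mul_le_mul_of_nonneg_left this hl.le
        linarith
    have h4 : lam * Real.exp (C / 4 * T) * (-t) ≤ lam * Real.exp (C / 4 * T) * T := by
      gcongr; linarith
    rw [hE]
    linarith
  have hBl : m 0 / 2 - (E + Real.exp (-2 * T) * C) ≤ B 0 := by
    have := mono_on_Icc (f := fun t => Real.exp (2 * t) * (B t - (m 0 - E) / 2))
        (f' := fun t => Real.exp (2 * t) * (m t - (m 0 - E)))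
        (a := -T) (b := 0) ?_ ?_ ?_ (-T) 0 le_rfl (by linarith) le_rfl
    · simp only [mul_zero, Real.exp_zero, one_mul] at this
      have h5 := h.B_nonneg (-T) (by linarith)
      have h6 : Real.exp (2 * -T) * (-C) ≤ Real.exp (2 * -T) * (B (-T) - (m 0 - E) / 2) := by
        gcongr; linarith
      have h7 : Real.exp (2 * -T) = Real.exp (-2 * T) := by congr 1; ring
      rw [h7] at this h6
      linarith
    · have := h.cB.mono (Icc_subset_Iic_self : Icc (-T) 0 ⊆ Iic 0)
      fun_prop
    · intro t h1 h2
      exact ((hasDerivAt_exp_two' t).mul ((h.dB t h2).sub_const _)).congr_deriv (by ring)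
    · intro t h1 h2
      exact mul_nonneg (Real.exp_pos _).le (by linarith [hmt t h1.le h2.le])
  set D := E + Real.exp (-2 * T) * C with hD
  have hD0 : 0 ≤ D := by positivity
  refine ⟨?_, ?_, hB1, hBl, hmt⟩
  · by_contra hc
    push Not at hc
    nlinarith
  · by_contra hc
    push Not at hc
    have h8 : 0 ≤ m 0 / 2 - D := by linarith
    have h9 : (m 0 / 2 - D) ^ 2 ≤ B 0 ^ 2 := by gcongr
    nlinarith

end RadODE

end

section

open Set Topology
namespace RadODE

lemma seq {C : ℝ} {lam N : ℕ → ℝ} {V A B m : ℕ → ℝ → ℝ}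
    (h : ∀ k, RadODE C (lam k) (N k) (V k) (A k) (B k) (m k)) (hN : Tendsto N atTop atTop) :
    ∀ S, 0 ≤ S → ∀ ε, 0 < ε → ∀ᶠ k in atTop, ∀ t, -S ≤ t → t ≤ 0 →
      |V k t - (-8 * t - 4 + 4 * Real.exp (2 * t))| ≤ ε := by
  have hC : 0 ≤ C := (h 0).C_nonneg
  have h24 : ∀ T, ∀ᶠ k in atTop, ∀ t, -T ≤ t → t ≤ 0 → 24 ≤ m k t := by
    intro T
    filter_upwards [hN.eventually_gt_atTop (C / 4 * (T + C / 4 + 4) + C / 16 + KK C / 16)]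
      with k hk t h1 h2
    by_contra hc
    push Not at hc
    have := (h k).N_le_of_mid h2 hc.le
    have h3 : C / 4 * (-t + C / 4 + 4) ≤ C / 4 * (T + C / 4 + 4) := by
      gcongr; linarith
    linarith
  have hlam : Tendsto lam atTop (𝓝 0) := by
    have hlim : Tendsto (fun T : ℝ => (4 * C + C ^ 2 / 8) * Real.exp (C / 4) * Real.exp (-2 * T))
        atTop (𝓝 0) := by
      have : Tendsto (fun T : ℝ => Real.exp (-2 * T)) atTop (𝓝 0) :=
        Real.tendsto_exp_atBot.comp (Tendsto.const_mul_atTop_of_neg (by norm_num) tendsto_id)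
      simpa using this.const_mul ((4 * C + C ^ 2 / 8) * Real.exp (C / 4))
    rw [Metric.tendsto_atTop']
    intro ε hε
    obtain ⟨T, hT, hT0⟩ := ((hlim.eventually (gt_mem_nhds hε)).and (eventually_ge_atTop 0)).exists
    obtain ⟨n, hn⟩ := eventually_atTop.1 (h24 T)
    refine ⟨n, fun k hk => ?_⟩
    have := (h k).lam_le_of hT0 (hn k hk.le)
    rw [Real.dist_eq, sub_zero, abs_of_pos (h k).hlam]
    linarith
  intro S hS ε hε
  set K := S * ((1 + Real.exp (2 * S) * S) + Real.exp (2 * S) * (1 + S)) with hK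
  have hK0 : 0 ≤ K := by positivity
  set η := ε / (K + 1) with hη
  have hη0 : 0 < η := by positivity
  -- choose T
  have hlim : Tendsto (fun T : ℝ => Real.exp (-2 * T) * C) atTop (𝓝 0) := by
    have : Tendsto (fun T : ℝ => Real.exp (-2 * T)) atTop (𝓝 0) :=
      Real.tendsto_exp_atBot.comp (Tendsto.const_mul_atTop_of_neg (by norm_num) tendsto_id)
    simpa using this.mul_const C
  obtain ⟨T, hT, hTS⟩ := ((hlim.eventually (gt_mem_nhds (by positivity : 0 < η / 100))).and
    (eventually_ge_atTop S)).exists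
  have hlT : Tendsto (fun k => lam k * T * Real.exp (C / 4 * T)) atTop (𝓝 0) := by
    simpa using (hlam.mul_const T).mul_const (Real.exp (C / 4 * T))
  filter_upwards [h24 0, hlT.eventually (gt_mem_nhds (by positivity : 0 < η / 100)),
    hlam.eventually (gt_mem_nhds (by positivity : 0 < η / 100))] with k h1 h2 h3
  obtain ⟨a1, a2, a3, a4, a5⟩ := (h k).mass_close (hS.trans hTS) (h1 0 (by simp) le_rfl)
  have := (h k).V_close hS hη0.le ?_ ?_
  · intro t ht ht'
    refine (this t ht ht').trans ?_
    rw [← hK, hη, mul_div_assoc', div_le_iff₀ (by positivity)]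
    nlinarith
  · intro t ht ht'
    have b1 := a5 t (by linarith) ht'
    have b2 := (h k).m_mono t 0 ht' le_rfl
    rw [abs_le]
    constructor <;> linarith
  · rw [abs_le]
    constructor <;> linarith

end RadODE

end

section

open Set Topology

lemma lap_rad {W W1 : ℝ → ℝ} {w2 : ℝ} {x : E4} (hx : x ≠ 0)
    (h1 : ∀ᶠ s in 𝓝 ‖x‖, HasDerivAt W (W1 s) s) (h2 : HasDerivAt W1 w2 ‖x‖) :
    lap (fun y => W ‖y‖) x = w2 + 3 * W1 ‖x‖ / ‖x‖ := by
  have hx0 : 0 < ‖x‖ := norm_pos_iff.2 hx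
  have hq : quad 1 0 0 x = ‖x‖^2 := by simp [quad]
  have hs : Real.sqrt (‖x‖^2) = ‖x‖ := Real.sqrt_sq (norm_nonneg _)
  have e1 : ∀ᶠ s in 𝓝 (quad 1 0 0 x), HasDerivAt (fun s => W (Real.sqrt s)) ((fun s => W1 (Real.sqrt s) * (1 / (2 * Real.sqrt s))) s) s := by
    rw [hq]
    have hc : Tendsto Real.sqrt (𝓝 (‖x‖^2)) (𝓝 ‖x‖) := by
      have := Real.continuous_sqrt.tendsto (‖x‖^2)
      rwa [hs] at this
    filter_upwards [hc.eventually h1, lt_mem_nhds (show (0:ℝ) < ‖x‖^2 by positivity)] with s hs1 hs2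
    exact hs1.comp s (Real.hasDerivAt_sqrt hs2.ne')
  have e2 : HasDerivAt (fun s => W1 (Real.sqrt s) * (1 / (2 * Real.sqrt s)))
      (w2 / (4 * ‖x‖^2) - W1 ‖x‖ / (4 * ‖x‖^3)) (quad 1 0 0 x) := by
    rw [hq]
    have hsq := Real.hasDerivAt_sqrt (show (‖x‖^2) ≠ 0 by positivity)
    have a1 : HasDerivAt (fun s => W1 (Real.sqrt s)) (w2 * (1 / (2 * Real.sqrt (‖x‖^2)))) (‖x‖^2) :=
      HasDerivAt.comp (h₂ := W1) (‖x‖^2) (by rw [hs]; exact h2) hsq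
    have a2 := (hsq.const_mul 2).inv (by rw [hs]; positivity)
    have a3 := a1.mul a2
    have : (fun s => W1 (Real.sqrt s) * (1 / (2 * Real.sqrt s))) = (fun s => W1 (Real.sqrt s)) * (fun s => 2 * Real.sqrt s)⁻¹ := by
      funext s; simp
    rw [this]
    refine a3.congr_deriv ?_
    simp only [Pi.inv_apply]
    rw [hs]
    field_simp
    ring
  have := lap_quad_mul (a := 1) (a' := 0) (b := 0) (b' := 1) (c := 0) (c' := 0) (x := x) e1 e2
  have hf : (fun y => quad 0 0 1 y * (fun s => W (Real.sqrt s)) (quad 1 0 0 y)) = fun y : E4 => W ‖y‖ := by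
    funext y
    simp [quad, Real.sqrt_sq (norm_nonneg y)]
  rw [hf] at this
  rw [this]
  simp [quad, hs]
  field_simp
  ring

lemma lap_lap_rad {u : E4 → ℝ} {U U1 U2 U3 U4 : ℝ → ℝ} {x : E4} (hx : x ≠ 0) (hxB : x ∈ oB)
    (hu : ∀ y ∈ oB, u y = U ‖y‖)
    (d0 : ∀ r ∈ Ioo (0:ℝ) 1, HasDerivAt U (U1 r) r) (d1 : ∀ r ∈ Ioo (0:ℝ) 1, HasDerivAt U1 (U2 r) r)
    (d2 : ∀ r ∈ Ioo (0:ℝ) 1, HasDerivAt U2 (U3 r) r) (d3 : ∀ r ∈ Ioo (0:ℝ) 1, HasDerivAt U3 (U4 r) r) :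
    lap (lap u) x = U4 ‖x‖ + 6 * U3 ‖x‖ / ‖x‖ + 3 * U2 ‖x‖ / ‖x‖^2 - 3 * U1 ‖x‖ / ‖x‖^3 := by
  have hI : ∀ y : E4, y ≠ 0 → y ∈ oB → ‖y‖ ∈ Ioo (0:ℝ) 1 := fun y h1 h2 => ⟨norm_pos_iff.2 h1, by simpa using h2⟩
  have hx1 := hI x hx hxB
  have hlap : ∀ y : E4, y ≠ 0 → y ∈ oB → lap u y = (fun r => U2 r + 3 * U1 r / r) ‖y‖ := by
    intro y h1 h2
    have : u =ᶠ[𝓝 y] fun z => U ‖z‖ := by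
      filter_upwards [isOpen_ball.mem_nhds h2] with z hz using hu z hz
    rw [lap_congr this, lap_rad h1 (W1 := U1) (w2 := U2 ‖y‖) _ (d1 _ (hI y h1 h2))]
    filter_upwards [isOpen_Ioo.mem_nhds (hI y h1 h2)] with s hs using d0 s hs
  have hev : lap u =ᶠ[𝓝 x] fun z => (fun r => U2 r + 3 * U1 r / r) ‖z‖ := by
    filter_upwards [isOpen_ball.mem_nhds hxB, isOpen_ne.mem_nhds hx] with z hz1 hz2 using hlap z hz2 hz1
  have hW1 : ∀ r ∈ Ioo (0:ℝ) 1, HasDerivAt (fun r => U2 r + 3 * U1 r / r) ((fun r => U3 r + (3 * U2 r / r - 3 * U1 r / r^2)) r) r := by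
    intro r hr
    have hr0 := hr.1.ne'
    refine ((d2 r hr).add (((d1 r hr).const_mul 3).div (hasDerivAt_id r) hr0)).congr_deriv ?_
    simp only [id]
    field_simp
  have hW2 : HasDerivAt (fun r => U3 r + (3 * U2 r / r - 3 * U1 r / r^2)) (U4 ‖x‖ + 3 * U3 ‖x‖ / ‖x‖ - 6 * U2 ‖x‖ / ‖x‖^2 + 6 * U1 ‖x‖ / ‖x‖^3) ‖x‖ := by
    have hr0 := hx1.1.ne'
    refine ((d3 _ hx1).add ((((d2 _ hx1).const_mul 3).div (hasDerivAt_id _) hr0).sub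
      (((d1 _ hx1).const_mul 3).div (hasDerivAt_pow 2 _) (pow_ne_zero 2 hr0)))).congr_deriv ?_
    simp only [id]
    field_simp
    ring
  rw [lap_congr hev, lap_rad (W := fun r => U2 r + 3 * U1 r / r) hx _ hW2]
  · have hr0 := hx1.1.ne'
    field_simp
    ring
  · filter_upwards [isOpen_Ioo.mem_nhds hx1] with s hs using hW1 s hs

/-- unit vector -/
def e0 : E4 := EuclideanSpace.single 0 (1:ℝ)

lemma e0_norm : ‖e0‖ = 1 := by simp [e0]

lemma re0_norm {r : ℝ} (hr : 0 ≤ r) : ‖r • e0‖ = r := by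
  rw [norm_smul, e0_norm, Real.norm_eq_abs, abs_of_nonneg hr, mul_one]

lemma uI : UniqueDiffOn ℝ (Icc (-1:ℝ) 1) := uniqueDiffOn_Icc (by norm_num)

lemma step {n : WithTop ℕ∞} {f : ℝ → ℝ} (hf : ContDiffOn ℝ (n + 1) f (Icc (-1:ℝ) 1)) :
    ContDiffOn ℝ n (derivWithin f (Icc (-1:ℝ) 1)) (Icc (-1:ℝ) 1) ∧
    ∀ r ∈ Ioo (-1:ℝ) 1, HasDerivAt f (derivWithin f (Icc (-1:ℝ) 1) r) r := by
  refine ⟨hf.derivWithin uI le_rfl, fun r hr => ?_⟩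
  have : DifferentiableWithinAt ℝ f (Icc (-1:ℝ) 1) r :=
    hf.differentiableOn (by simp) r (Ioo_subset_Icc_self hr)
  exact this.hasDerivWithinAt.hasDerivAt (Icc_mem_nhds hr.1 hr.2)

/-- From a radial profile to the `RadODE`. -/
lemma radODE_profile {C lam : ℝ} {U U1 U2 U3 U4 : ℝ → ℝ} (hlam : 0 < lam)
    (c0 : ContinuousOn U (Icc (-1:ℝ) 1)) (c1 : ContinuousOn U1 (Icc (-1:ℝ) 1))
    (c2 : ContinuousOn U2 (Icc (-1:ℝ) 1)) (c3 : ContinuousOn U3 (Icc (-1:ℝ) 1))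
    (d0 : ∀ r ∈ Ioo (-1:ℝ) 1, HasDerivAt U (U1 r) r) (d1 : ∀ r ∈ Ioo (-1:ℝ) 1, HasDerivAt U1 (U2 r) r)
    (d2 : ∀ r ∈ Ioo (-1:ℝ) 1, HasDerivAt U2 (U3 r) r) (d3 : ∀ r ∈ Ioo (-1:ℝ) 1, HasDerivAt U3 (U4 r) r)
    (ode : ∀ r ∈ Ioo (0:ℝ) 1, U4 r + 6 * U3 r / r + 3 * U2 r / r^2 - 3 * U1 r / r^3 = lam * Real.exp (U r))
    (b0 : U 1 = 0) (b1 : U1 1 = 0)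
    (hC : lam * ∫ r in (0:ℝ)..1, r^3 * Real.exp (U r) ≤ C) :
    ∃ A B m : ℝ → ℝ, RadODE C lam (U 0) (fun t => U (Real.exp t)) A B m := by
  have h01 : Icc (0:ℝ) 1 ⊆ Icc (-1:ℝ) 1 := Icc_subset_Icc (by norm_num) le_rfl
  have o01 : Ioo (0:ℝ) 1 ⊆ Ioo (-1:ℝ) 1 := Ioo_subset_Ioo (by norm_num) le_rfl
  have hmap : MapsTo Real.exp (Iic 0) (Icc (-1:ℝ) 1) := fun t ht =>
    ⟨by linarith [Real.exp_pos t], Real.exp_le_one_iff.2 ht⟩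
  have hio : ∀ t : ℝ, t < 0 → Real.exp t ∈ Ioo (0:ℝ) 1 := fun t ht => ⟨Real.exp_pos t, by rw [← Real.exp_zero]; exact Real.exp_lt_exp.2 ht⟩
  have hcomp : ∀ {f : ℝ → ℝ}, ContinuousOn f (Icc (-1:ℝ) 1) → ContinuousOn (fun t => f (Real.exp t)) (Iic 0) :=
    fun hf => hf.comp Real.continuous_exp.continuousOn hmap
  have hlim : ∀ {f : ℝ → ℝ}, ContinuousOn f (Icc (-1:ℝ) 1) → Tendsto (fun t => f (Real.exp t)) atBot (𝓝 (f 0)) := by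
    intro f hf
    have : ContinuousAt f 0 := hf.continuousAt (Icc_mem_nhds (by norm_num) (by norm_num))
    exact this.tendsto.comp Real.tendsto_exp_atBot
  set fA : ℝ → ℝ := fun r => -2 * (r * U1 r) - (r * U1 r + r^2 * U2 r) with hfA
  set fB : ℝ → ℝ := fun r => -2 * (r * U1 r) + (r * U1 r + r^2 * U2 r) with hfB
  set fm : ℝ → ℝ := fun r => r^3 * U3 r + 3 * (r^2 * U2 r) - 3 * (r * U1 r) with hfm
  have cfA : ContinuousOn fA (Icc (-1:ℝ) 1) := by fun_prop
  have cfB : ContinuousOn fB (Icc (-1:ℝ) 1) := by fun_prop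
  have cfm : ContinuousOn fm (Icc (-1:ℝ) 1) := by fun_prop
  have k1 : ∀ r ∈ Ioo (0:ℝ) 1, HasDerivAt (fun r => r * U1 r) (U1 r + r * U2 r) r := fun r hr =>
    ((hasDerivAt_id r).mul (d1 r (o01 hr))).congr_deriv (by simp [id])
  have k2 : ∀ r ∈ Ioo (0:ℝ) 1, HasDerivAt (fun r => r^2 * U2 r) (2 * r * U2 r + r^2 * U3 r) r := fun r hr =>
    ((hasDerivAt_pow 2 r).mul (d2 r (o01 hr))).congr_deriv (by simp)
  have k3 : ∀ r ∈ Ioo (0:ℝ) 1, HasDerivAt (fun r => r^3 * U3 r) (3 * r^2 * U3 r + r^3 * U4 r) r := fun r hr =>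
    ((hasDerivAt_pow 3 r).mul (d3 r (o01 hr))).congr_deriv (by simp)
  have dfA : ∀ r ∈ Ioo (0:ℝ) 1, HasDerivAt fA (-2 * (U1 r + r * U2 r) - (U1 r + r * U2 r + (2 * r * U2 r + r^2 * U3 r))) r := fun r hr =>
    ((k1 r hr).const_mul (-2)).sub ((k1 r hr).add (k2 r hr))
  have dfB : ∀ r ∈ Ioo (0:ℝ) 1, HasDerivAt fB (-2 * (U1 r + r * U2 r) + (U1 r + r * U2 r + (2 * r * U2 r + r^2 * U3 r))) r := fun r hr =>
    ((k1 r hr).const_mul (-2)).add ((k1 r hr).add (k2 r hr))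
  have dfm : ∀ r ∈ Ioo (0:ℝ) 1, HasDerivAt fm (lam * (r^3 * Real.exp (U r))) r := fun r hr => by
    refine (((k3 r hr).add ((k2 r hr).const_mul 3)).sub ((k1 r hr).const_mul 3)).congr_deriv ?_
    have := ode r hr
    have hr0 := hr.1.ne'
    have e : lam * (r^3 * Real.exp (U r)) = r^3 * (lam * Real.exp (U r)) := by ring
    rw [e, ← this]
    field_simp
    ring
  have hexp : ∀ {f : ℝ → ℝ} {f' : ℝ} {t : ℝ}, HasDerivAt f f' (Real.exp t) → HasDerivAt (fun t => f (Real.exp t)) (f' * Real.exp t) t :=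
    fun {f f' t} h => h.comp t (Real.hasDerivAt_exp t)
  have cint : ContinuousOn (fun r => lam * (r^3 * Real.exp (U r))) (Icc (0:ℝ) 1) := by
    have := c0.mono h01
    fun_prop
  have hm1 : fm 1 ≤ C := by
    have := intervalIntegral.integral_eq_sub_of_hasDerivAt_of_le (zero_le_one) (cfm.mono h01) dfm
      (by rw [← uIcc_of_le (zero_le_one' ℝ)] at cint; exact cint.intervalIntegrable)
    rw [intervalIntegral.integral_const_mul] at this
    have h0 : fm 0 = 0 := by simp [hfm]
    rw [h0] at this
    linarith
  have hmono : MonotoneOn fm (Icc (0:ℝ) 1) := by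
    refine monotoneOn_of_hasDerivWithinAt_nonneg (f' := fun r => lam * (r^3 * Real.exp (U r))) (convex_Icc _ _) (cfm.mono h01) ?_ ?_
    · intro r hr
      rw [interior_Icc] at hr
      exact (dfm r hr).hasDerivWithinAt
    · intro r hr
      rw [interior_Icc] at hr
      have := hr.1
      positivity
  refine ⟨fun t => fA (Real.exp t), fun t => fB (Real.exp t), fun t => fm (Real.exp t), ?_⟩
  refine ⟨hlam, hcomp c0, hcomp cfA, hcomp cfB, hcomp cfm, ?_, ?_, ?_, ?_, ?_, ?_, hlim c0, ?_, ?_, ?_, ?_⟩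
  · intro t ht
    refine (hexp (d0 _ (o01 (hio t ht)))).congr_deriv ?_
    simp only [hfA, hfB]; ring
  · intro t ht
    refine (hexp (dfA _ (hio t ht))).congr_deriv ?_
    simp only [hfA, hfm]; ring
  · intro t ht
    refine (hexp (dfB _ (hio t ht))).congr_deriv ?_
    simp only [hfB, hfm]; ring
  · intro t ht
    refine (hexp (dfm _ (hio t ht))).congr_deriv ?_
    have : Real.exp (4 * t + U (Real.exp t)) = Real.exp t ^ 4 * Real.exp (U (Real.exp t)) := by
      rw [Real.exp_add, ← Real.exp_nat_mul]; norm_num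
    rw [this]; ring
  · simpa using b0
  · simp [hfA, hfB, b1]
  · have := hlim cfA; simpa [hfA] using this
  · have := hlim cfB; simpa [hfB] using this
  · have := hlim cfm; simpa [hfm] using this
  · intro t ht
    refine le_trans (hmono ⟨(Real.exp_pos t).le, Real.exp_le_one_iff.2 ht⟩ (right_mem_Icc.2 zero_le_one) (Real.exp_le_one_iff.2 ht)) hm1

lemma polar {U : ℝ → ℝ} {u : E4 → ℝ} (hu : ∀ y ∈ oB, u y = U ‖y‖) :
    ∫ y in oB, Real.exp (u y) = 4 * volume.real oB * ∫ r in (0:ℝ)..1, r^3 * Real.exp (U r) := by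
  have h1 : ∫ y in oB, Real.exp (u y) = ∫ y : E4, (fun r : ℝ => (Iio (1:ℝ)).indicator (fun r => Real.exp (U r)) r) ‖y‖ := by
    rw [← integral_indicator measurableSet_ball]
    refine integral_congr_ae (Eventually.of_forall fun y => ?_)
    by_cases hy : y ∈ oB
    · have : ‖y‖ < 1 := by simpa using hy
      simp only [indicator_of_mem hy, hu y hy]
      rw [indicator_of_mem (show ‖y‖ ∈ Iio (1:ℝ) from this)]
    · have : ¬ ‖y‖ < 1 := by simpa using hy
      simp only [indicator_of_notMem hy]
      rw [indicator_of_notMem (show ‖y‖ ∉ Iio (1:ℝ) from this)]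
  rw [h1, integral_fun_norm_addHaar]
  have h4 : Module.finrank ℝ E4 = 4 := by simp
  rw [h4]
  have h2 : ∫ y in Ioi (0:ℝ), y ^ (4 - 1) • (Iio (1:ℝ)).indicator (fun r => Real.exp (U r)) y = ∫ r in (0:ℝ)..1, r^3 * Real.exp (U r) := by
    rw [intervalIntegral.integral_of_le zero_le_one, integral_Ioc_eq_integral_Ioo]
    have : ∀ y : ℝ, y ^ (4 - 1) • (Iio (1:ℝ)).indicator (fun r => Real.exp (U r)) y = (Iio (1:ℝ)).indicator (fun r => r^3 * Real.exp (U r)) y := by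
      intro y
      by_cases hy : y ∈ Iio (1:ℝ)
      · simp only [indicator_of_mem hy]; simp
      · simp only [indicator_of_notMem hy]; simp
    simp_rw [this]
    rw [setIntegral_indicator measurableSet_Iio, Ioi_inter_Iio]
  rw [h2]
  simp [smul_eq_mul]
  ring

theorem sol_main {ρ Λ : ℝ} {u : E4 → ℝ} (hρ : 0 < ρ) (hΛ : ρ ≤ Λ) (hu : IsMFSolution ρ u) :
    (∀ x ∈ cB, u x = u (‖x‖ • e0)) ∧
    ∃ lam, ∃ A B m : ℝ → ℝ, RadODE (Λ / (4 * volume.real oB)) lam (u 0) (fun t => u (Real.exp t • e0)) A B m := by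
  obtain ⟨hC4, hpde, hbc⟩ := hu
  have cu : ContinuousOn u cB := hC4.continuousOn
  have ce : ContinuousOn (fun y => Real.exp (u y)) cB := Real.continuous_exp.comp_continuousOn cu
  have hvol : 0 < volume.real oB := ENNReal.toReal_pos (measure_ball_pos _ _ one_pos).ne' measure_ball_lt_top.ne
  have hI : 0 < ∫ y in oB, Real.exp (u y) := by
    rw [setIntegral_pos_iff_support_of_nonneg_ae (Eventually.of_forall fun y => (Real.exp_pos _).le) (integrableOn_oB ce)]
    have : Function.support (fun y => Real.exp (u y)) = univ := by
      ext y; simp [(Real.exp_pos (u y)).ne']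
    rw [this, univ_inter]
    exact measure_ball_pos _ _ one_pos
  set I := ∫ y in oB, Real.exp (u y) with hIdef
  have hlam : 0 < ρ / I := div_pos hρ hI
  have hpde' : ∀ x ∈ oB, lap (lap u) x = ρ / I * Real.exp (u x) := by
    intro x hx
    rw [hpde x hx]; ring
  have mp : MP ((96 * cJ)⁻¹ * (ρ / I)) u := by
    refine ⟨mul_pos (inv_pos.2 (mul_pos (by norm_num) cJ_pos)) hlam, cu, fun x hx => ?_⟩
    rw [rep hC4 hbc hpde' (continuousOn_const.mul ce) hx, mul_assoc, ← integral_const_mul (ρ / I)]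
    congr 1
    refine integral_congr_ae (Eventually.of_forall fun y => ?_)
    show HH x y * (ρ / I * Real.exp (u y)) = ρ / I * (HH x y * Real.exp (u y))
    ring
  have hrad : ∀ x ∈ oB, u x = u (‖x‖ • e0) := fun x hx => radial mp hx (re0_norm (norm_nonneg x)).symm
  refine ⟨?_, ρ / I, ?_⟩
  · intro x hx
    rcases (show ‖x‖ ≤ 1 by simpa using hx).lt_or_eq with h | h
    · exact hrad x (by simpa using h)
    · rw [(hbc x h).1, (hbc _ (by rw [re0_norm (norm_nonneg _), h])).1]
  have hline : MapsTo (fun r : ℝ => r • e0) (Icc (-1:ℝ) 1) cB := by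
    intro r hr
    have : |r| ≤ 1 := abs_le.2 hr
    simpa [norm_smul, e0_norm] using this
  have cl : ContDiff ℝ 4 (fun r : ℝ => r • e0) := contDiff_id.smul contDiff_const
  set U : ℝ → ℝ := fun r => u (r • e0) with hU
  have s0 : ContDiffOn ℝ 4 U (Icc (-1:ℝ) 1) := hC4.comp cl.contDiffOn hline
  obtain ⟨s1, d0⟩ := step (n := 3) (by norm_num; exact s0)
  obtain ⟨s2, d1⟩ := step (n := 2) (by norm_num; exact s1)
  obtain ⟨s3, d2⟩ := step (n := 1) (by norm_num; exact s2)
  obtain ⟨s4, d3⟩ := step (n := 0) (by norm_num; exact s3)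
  have o01 : Ioo (0:ℝ) 1 ⊆ Ioo (-1:ℝ) 1 := Ioo_subset_Ioo (by norm_num) le_rfl
  have b1 : derivWithin U (Icc (-1:ℝ) 1) 1 = 0 := by
    have hd : DifferentiableWithinAt ℝ u cB ((1:ℝ) • e0) := hC4.differentiableOn (by norm_num) _ (hline (by norm_num))
    have h1 := hd.hasFDerivWithinAt
    have h2 : fderivWithin ℝ u cB ((1:ℝ) • e0) = 0 := (hbc _ (by rw [re0_norm zero_le_one])).2
    rw [h2] at h1
    have h3 : HasDerivWithinAt (fun r : ℝ => r • e0) e0 (Icc (-1:ℝ) 1) 1 := by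
      have := ((hasDerivAt_id (1:ℝ)).smul_const e0).hasDerivWithinAt (s := Icc (-1:ℝ) 1)
      simpa using this
    have h4 := h1.comp_hasDerivWithinAt (1:ℝ) h3 hline
    have h5 := h4.derivWithin (uI 1 (by norm_num))
    have h6 : derivWithin U (Icc (-1:ℝ) 1) 1 = (0 : E4 →L[ℝ] ℝ) e0 := h5
    simpa using h6
  have h0 : u 0 = U 0 := by simp [hU]
  rw [h0]
  refine radODE_profile (U := U) hlam s0.continuousOn s1.continuousOn s2.continuousOn s3.continuousOn d0 d1 d2 d3 ?_ ?_ b1 ?_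
  · intro r hr
    have hn := re0_norm hr.1.le
    have hxB : r • e0 ∈ oB := by
      have := hr.2
      rw [← hn] at this
      simpa using this
    have hx0 : r • e0 ≠ 0 := by
      intro h; rw [h] at hn; have := hr.1; simp at hn; linarith
    have := lap_lap_rad (U := U) hx0 hxB hrad (fun s hs => d0 s (o01 hs)) (fun s hs => d1 s (o01 hs)) (fun s hs => d2 s (o01 hs)) (fun s hs => d3 s (o01 hs))
    rw [hn, hpde' _ hxB] at this
    exact this.symm
  · exact (hbc _ (by rw [re0_norm zero_le_one])).1
  · have hp := polar (U := U) hrad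
    rw [← hIdef] at hp
    rw [le_div_iff₀ (by positivity)]
    have : ρ / I * (∫ r in (0:ℝ)..1, r^3 * Real.exp (U r)) * (4 * volume.real oB) = ρ / I * I := by
      rw [mul_assoc (ρ / I), mul_comm (∫ r in (0:ℝ)..1, r^3 * Real.exp (U r)), ← hp]
    rw [this, div_mul_cancel₀ _ hI.ne']
    exact hΛ

end

section

open Set Topology

lemma brkt_zero (z : E4) : brkt z 0 = 1 := by
  simp [brkt]

lemma boggio_zero {z : E4} (hz : z ≠ 0) :
    64 * Real.pi ^ 2 * boggioG z 0 = -8 * Real.log ‖z‖ - 4 + 4 * ‖z‖^2 := by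
  have hz0 : 0 < ‖z‖ := norm_pos_iff.2 hz
  unfold boggioG
  rw [brkt_zero, sub_zero]
  have hpos : ∀ v ∈ uIcc (1:ℝ) (1 / ‖z‖), 0 < v := by
    intro v hv
    have h1 : 0 < min 1 (1 / ‖z‖) := lt_min one_pos (by positivity)
    exact lt_of_lt_of_le h1 hv.1
  have hIntg : ∫ v in (1:ℝ)..(1 / ‖z‖), (v ^ 2 - 1) / v ^ 3
      = (Real.log (1/‖z‖) + (1/2) * ((1/‖z‖)^2)⁻¹) - (Real.log 1 + (1/2) * ((1:ℝ)^2)⁻¹) := by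
    refine intervalIntegral.integral_eq_sub_of_hasDerivAt (f := fun v => Real.log v + (1/2) * (v^2)⁻¹) ?_ ?_
    · intro v hv
      have hv0 := (hpos v hv).ne'
      refine ((Real.hasDerivAt_log hv0).add (((hasDerivAt_pow 2 v).inv (pow_ne_zero 2 hv0)).const_mul (1/2))).congr_deriv ?_
      push_cast
      field_simp
      ring
    · refine ContinuousOn.intervalIntegrable ?_
      refine ContinuousOn.div (by fun_prop) (by fun_prop) (fun v hv => pow_ne_zero 3 (hpos v hv).ne')
  rw [hIntg, Real.log_one, one_div ‖z‖, Real.log_inv]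
  have hpi := Real.pi_pos.ne'
  field_simp
  ring

lemma regR_fderiv : fderiv ℝ (fun z => regR z 0) (0:E4) = 0 := by
  have h : (fun z : E4 => regR z 0) = fun z => (1 / (8 * Real.pi ^ 2)) * (‖z‖^2 / 2 - 1/2) := by
    funext z
    simp [regR, brkt_zero]
  rw [h]
  have hd : HasFDerivAt (fun z : E4 => ‖z‖^2) (0 : E4 →L[ℝ] ℝ) 0 := by
    have := (hasStrictFDerivAt_norm_sq (0:E4)).hasFDerivAt
    simpa using this
  have h2 := ((hd.mul_const (1/2)).sub_const (1/2)).const_mul (1 / (8 * Real.pi ^ 2))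
  have h3 : (fun z : E4 => (1 / (8 * Real.pi ^ 2)) * (‖z‖^2 / 2 - 1/2)) = fun z : E4 => (1 / (8 * Real.pi ^ 2)) * (‖z‖^2 * (1/2) - 1/2) := by
    funext z; ring
  rw [h3, h2.fderiv]
  simp

theorem mf_final (Λ : ℝ) (hΛ : 0 < Λ)
    (ρ : ℕ → ℝ) (u : ℕ → E4 → ℝ)
    (hρ : ∀ k, 0 < ρ k ∧ ρ k ≤ Λ)
    (hsol : ∀ k, IsMFSolution (ρ k) (u k))
    (hblow : Tendsto (fun k => sSup ((u k) '' cB)) atTop atTop)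
    (K : Set E4) (hK : IsCompact K) (hKs : K ⊆ cB) (hK0 : (0:E4) ∉ K) :
    TendstoUniformlyOn u (fun z => 64 * Real.pi ^ 2 * boggioG z 0) atTop K := by
  have hmain := fun k => sol_main (hρ k).1 (hρ k).2 (hsol k)
  choose hrad lam A B m hode using hmain
  have hN : Tendsto (fun k => u k 0) atTop atTop := by
    refine tendsto_atTop_mono (fun k => ?_) hblow
    refine csSup_le ⟨u k 0, 0, by simp, rfl⟩ ?_
    rintro _ ⟨x, hx, rfl⟩
    by_cases hx0 : x = 0
    · rw [hx0]
    have hpos : 0 < ‖x‖ := norm_pos_iff.2 hx0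
    have hle : ‖x‖ ≤ 1 := by simpa using hx
    have := (hode k).V_le_N (Real.log ‖x‖) (Real.log_nonpos hpos.le hle)
    simp only [Real.exp_log hpos] at this
    rw [hrad k x hx]
    exact this
  have hseq := RadODE.seq hode hN
  obtain ⟨d, hd, hdK⟩ : ∃ d > 0, ∀ z ∈ K, d ≤ ‖z‖ := by
    have : Disjoint ({(0:E4)}) K := by simpa using hK0
    obtain ⟨d, hd, h⟩ := Metric.isOpen_iff.1 hK.isClosed.isOpen_compl 0 hK0
    refine ⟨d, hd, fun z hz => ?_⟩
    by_contra hc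
    push Not at hc
    exact h (by simpa using hc) hz
  rw [Metric.tendstoUniformlyOn_iff]
  intro ε hε
  filter_upwards [hseq (max 0 (-Real.log d)) (le_max_left _ _) (ε/2) (by positivity)] with k hk z hz
  have hz0 : 0 < ‖z‖ := hd.trans_le (hdK z hz)
  have hzn : z ≠ 0 := norm_pos_iff.1 hz0
  have hle : ‖z‖ ≤ 1 := by simpa using hKs hz
  have h1 := hk (Real.log ‖z‖) (by
    have := Real.log_le_log hd (hdK z hz)
    have := le_max_right 0 (-Real.log d)
    linarith) (Real.log_nonpos hz0.le hle)
  simp only [Real.exp_log hz0] at h1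
  have h2 : Real.exp (2 * Real.log ‖z‖) = ‖z‖^2 := by
    rw [two_mul, Real.exp_add, Real.exp_log hz0, sq]
  rw [h2, ← hrad k z (hKs hz)] at h1
  rw [boggio_zero hzn, Real.dist_eq, abs_sub_comm]
  linarith

end

/-- Full blow-up description: along a subsequence, blowing-up solutions concentrate at
finitely many distinct interior points `x₁,…,x_m`, converge to `64π² ∑ⱼ G(·,xⱼ)` locally
uniformly away from these points, and the points satisfy the balancing condition
`∇ₓ(R(·,xⱼ) + ∑_{l≠j} G(·,x_l))(xⱼ) = 0`. -/
theorem mean_field_blowup_description (Λ : ℝ) (hΛ : 0 < Λ)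
    (ρ : ℕ → ℝ) (u : ℕ → EuclideanSpace ℝ (Fin 4) → ℝ)
    (hρ : ∀ k, 0 < ρ k ∧ ρ k ≤ Λ)
    (hsol : ∀ k, IsMFSolution (ρ k) (u k))
    (hblow : Tendsto
      (fun k => sSup ((u k) '' closedBall (0 : EuclideanSpace ℝ (Fin 4)) 1))
      atTop atTop) :
    ∃ φ : ℕ → ℕ, StrictMono φ ∧ ∃ m : ℕ, 0 < m ∧
      ∃ x : Fin m → EuclideanSpace ℝ (Fin 4),
        (∀ j, x j ∈ ball (0 : EuclideanSpace ℝ (Fin 4)) 1) ∧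
        Function.Injective x ∧
        (∀ K : Set (EuclideanSpace ℝ (Fin 4)), IsCompact K →
          K ⊆ closedBall (0 : EuclideanSpace ℝ (Fin 4)) 1 \ Set.range x →
          TendstoUniformlyOn (fun j z => u (φ j) z)
            (fun z => 64 * Real.pi ^ 2 * ∑ l : Fin m, boggioG z (x l)) atTop K) ∧
        (∀ j : Fin m,
          fderiv ℝ
            (fun z => regR z (x j) + ∑ l ∈ Finset.univ.erase j, boggioG z (x l))
            (x j) = 0) := by
  refine ⟨id, strictMono_id, 1, one_pos, fun _ => 0, fun _ => by simp, fun a b _ => Subsingleton.elim a b, ?_, ?_⟩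
  · intro K hK hKs
    have h := mf_final Λ hΛ ρ u hρ hsol hblow K hK (fun z hz => (hKs hz).1)
      (fun h0 => (hKs h0).2 ⟨0, rfl⟩)
    simpa using h
  · intro j
    have hj : Finset.univ.erase j = (∅ : Finset (Fin 1)) := by
      ext a; simp [Subsingleton.elim a j]
    rw [hj]
    simpa using regR_fderiv

end
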